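/- arXiv:1202.2555 — 13 statements merged into one kernel-verified Lean document; each statement's English description precedes it below -/
import Mathlib

section
/- Let γ : ℝ → ℂ be a smooth curve parametrized by arclength that satisfies the Abresch–Langer self-shrinker equation γ''(t) = ⟨γ'(t), i·γ(t)⟩ · i·γ'(t) for all t. Then the function t ↦ ⟨γ'(t), i·γ(t)⟩ · e^{−|γ(t)|²/2} is constant on ℝ; consequently the curvature κ(t) = ⟨γ''(t), i·γ'(t)⟩ satisfies κ(t) = ρ · e^{|γ(t)|²/2} for all t, where ρ = ⟨γ'(0), i·γ(0)⟩ · e^{−|γ(0)|²/2}. -/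
/-- Real inner product on ℂ ≅ ℝ²: ⟨u,v⟩ = Re(u · conj v). -/
noncomputable def rinner (u v : ℂ) : ℝ := u.re * v.re + u.im * v.im

/-- For a smooth arclength-parametrized curve satisfying the Abresch–Langer
self-shrinker equation γ'' = ⟨γ', iγ⟩ iγ', the quantity ⟨γ', iγ⟩ e^{-|γ|²/2} is
constant, hence the curvature κ = ⟨γ'', iγ'⟩ equals ρ e^{|γ|²/2}. -/
theorem abresch_langer_curvature (γ : ℝ → ℂ) (hsmooth : ContDiff ℝ (⊤ : ℕ∞) γ)
    (harc : ∀ t, ‖deriv γ t‖ = 1)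
    (hAL : ∀ t, deriv (deriv γ) t =
      (rinner (deriv γ t) (Complex.I * γ t)) • (Complex.I * deriv γ t)) :
    (∀ t, rinner (deriv γ t) (Complex.I * γ t) * Real.exp (-‖γ t‖ ^ 2 / 2)
        = rinner (deriv γ 0) (Complex.I * γ 0) * Real.exp (-‖γ 0‖ ^ 2 / 2)) ∧
    (∀ t, rinner (deriv (deriv γ) t) (Complex.I * deriv γ t)
        = (rinner (deriv γ 0) (Complex.I * γ 0) * Real.exp (-‖γ 0‖ ^ 2 / 2))
            * Real.exp (‖γ t‖ ^ 2 / 2)) := by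
  have hd : ∀ t, HasDerivAt γ (deriv γ t) t := fun t =>
    ((hsmooth.differentiable (by simp)) t).hasDerivAt
  have hs1 : ContDiff ℝ 1 (deriv γ) := by
    have h2 : ContDiff ℝ (1 + 1) γ := by
      have h3 := contDiff_infty.1 hsmooth (1 + 1)
      exact_mod_cast h3
    exact (contDiff_succ_iff_deriv.1 h2).2.2
  have hdd : ∀ t, HasDerivAt (deriv γ) (deriv (deriv γ) t) t := fun t =>
    ((hs1.differentiable (by simp)) t).hasDerivAt
  have hre : ∀ (f : ℝ → ℂ) (f' : ℂ) (t : ℝ), HasDerivAt f f' t →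
      HasDerivAt (fun s => (f s).re) f'.re t := fun f f' t h =>
    Complex.reCLM.hasFDerivAt.comp_hasDerivAt t h
  have him : ∀ (f : ℝ → ℂ) (f' : ℂ) (t : ℝ), HasDerivAt f f' t →
      HasDerivAt (fun s => (f s).im) f'.im t := fun f f' t h =>
    Complex.imCLM.hasFDerivAt.comp_hasDerivAt t h
  have hn : ∀ z : ℂ, ‖z‖ ^ 2 = z.re * z.re + z.im * z.im := fun z => by
    rw [Complex.sq_norm, Complex.normSq_apply]
  have key : ∀ t, HasDerivAt (fun t => rinner (deriv γ t) (Complex.I * γ t)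
      * Real.exp (-‖γ t‖ ^ 2 / 2)) 0 t := by
    intro t
    have hx := hre _ _ t (hd t)
    have hy := him _ _ t (hd t)
    have hp := hre _ _ t (hdd t)
    have hq := him _ _ t (hdd t)
    have hA := congrArg Complex.re (hAL t)
    have hB := congrArg Complex.im (hAL t)
    have hu := hn (deriv γ t)
    simp [rinner] at hA hB
    have h := ((hq.mul hx).sub (hp.mul hy)).mul
      ((((hx.mul hx).add (hy.mul hy)).neg.div_const 2).exp)
    refine (h.congr_of_eventuallyEq (Filter.Eventually.of_forall fun s => ?_)).congr_deriv ?_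
    · simp [rinner, hn]
      ring
    · simp only [Pi.mul_apply, Pi.add_apply, Pi.neg_apply, Pi.sub_apply]
      rw [hA, hB]
      ring
  have hc : ∀ t, rinner (deriv γ t) (Complex.I * γ t) * Real.exp (-‖γ t‖ ^ 2 / 2)
        = rinner (deriv γ 0) (Complex.I * γ 0) * Real.exp (-‖γ 0‖ ^ 2 / 2) := fun t =>
    is_const_of_deriv_eq_zero (fun s => (key s).differentiableAt) (fun s => (key s).deriv) t 0
  refine ⟨hc, fun t => ?_⟩
  rw [← hc t, mul_assoc, ← Real.exp_add, hAL t]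
  have hu := hn (deriv γ t)
  rw [harc t] at hu
  have h0 : -‖γ t‖ ^ 2 / 2 + ‖γ t‖ ^ 2 / 2 = 0 := by ring
  rw [h0, Real.exp_zero, mul_one]
  generalize rinner (deriv γ t) (Complex.I * γ t) = k
  simp [rinner]
  linear_combination (-k) * hu
end

section
/- Let γ : ℝ → ℂ be a smooth curve parametrized by arclength that satisfies the Abresch–Langer self-shrinker equation γ''(t) = ⟨γ'(t), i·γ(t)⟩ · i·γ'(t), and suppose γ(t) ≠ 0 for all t. Set r(t) = |γ(t)| (which is differentiable with r'(t) = ⟨γ(t), γ'(t)⟩ / r(t)). Then the function t ↦ r(t)²·(1 − r'(t)²)·e^{−r(t)²} is constant on ℝ, equal to ρ² where ρ = ⟨γ'(0), i·γ(0)⟩ · e^{−|γ(0)|²/2}. -/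
/-- For a nonvanishing smooth arclength-parametrized curve satisfying the
Abresch–Langer self-shrinker equation γ'' = ⟨γ', iγ⟩ iγ', the radius r = |γ| is
differentiable with r' = ⟨γ,γ'⟩/r, and r²(1 - r'²)e^{-r²} is constant, equal to ρ²
where ρ = ⟨γ'(0), iγ(0)⟩ e^{-|γ(0)|²/2}. -/
theorem abresch_langer_first_integral (γ : ℝ → ℂ) (hsmooth : ContDiff ℝ (⊤ : ℕ∞) γ)
    (harc : ∀ t, ‖deriv γ t‖ = 1) (hne : ∀ t, γ t ≠ 0)
    (hAL : ∀ t, deriv (deriv γ) t =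
      (rinner (deriv γ t) (Complex.I * γ t)) • (Complex.I * deriv γ t)) :
    (∀ t, HasDerivAt (fun u => ‖γ u‖) (rinner (γ t) (deriv γ t) / ‖γ t‖) t) ∧
    (∀ t, ‖γ t‖ ^ 2 * (1 - (deriv (fun u => ‖γ u‖) t) ^ 2) * Real.exp (-‖γ t‖ ^ 2)
        = (rinner (deriv γ 0) (Complex.I * γ 0) * Real.exp (-‖γ 0‖ ^ 2 / 2)) ^ 2) := by
  have hd1 : Differentiable ℝ γ := hsmooth.differentiable (by simp)
  have hd2 : Differentiable ℝ (deriv γ) := by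
    have h : ContDiff ℝ (⊤ : ℕ∞) (deriv γ) := (contDiff_infty_iff_deriv.1 hsmooth).2
    exact h.differentiable (by simp)
  have hre : ∀ t, HasDerivAt (fun u => (γ u).re) (deriv γ t).re t := fun t =>
    Complex.reCLM.hasFDerivAt.comp_hasDerivAt t (hd1 t).hasDerivAt
  have him : ∀ t, HasDerivAt (fun u => (γ u).im) (deriv γ t).im t := fun t =>
    Complex.imCLM.hasFDerivAt.comp_hasDerivAt t (hd1 t).hasDerivAt
  have hre2 : ∀ t, HasDerivAt (fun u => (deriv γ u).re) (deriv (deriv γ) t).re t := fun t =>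
    Complex.reCLM.hasFDerivAt.comp_hasDerivAt t (hd2 t).hasDerivAt
  have him2 : ∀ t, HasDerivAt (fun u => (deriv γ u).im) (deriv (deriv γ) t).im t := fun t =>
    Complex.imCLM.hasFDerivAt.comp_hasDerivAt t (hd2 t).hasDerivAt
  have hnorm : ∀ z : ℂ, ‖z‖ ^ 2 = z.re ^ 2 + z.im ^ 2 := fun z => by
    rw [← Complex.normSq_eq_norm_sq, Complex.normSq_apply]; ring
  have hsq : ∀ t, HasDerivAt (fun u => (γ u).re ^ 2 + (γ u).im ^ 2)
      (2 * rinner (γ t) (deriv γ t)) t := fun t => by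
    refine (((hre t).pow 2).add ((him t).pow 2)).congr_deriv ?_
    simp [rinner]; ring
  have hpos : ∀ t, 0 < ‖γ t‖ := fun t => norm_pos_iff.2 (hne t)
  have hr : ∀ t, HasDerivAt (fun u => ‖γ u‖) (rinner (γ t) (deriv γ t) / ‖γ t‖) t := by
    intro t
    have hfun : (fun u => ‖γ u‖) = fun u => Real.sqrt ((γ u).re ^ 2 + (γ u).im ^ 2) := by
      funext u
      rw [← hnorm, Real.sqrt_sq (norm_nonneg _)]
    rw [hfun]
    have h0 : (γ t).re ^ 2 + (γ t).im ^ 2 ≠ 0 := by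
      rw [← hnorm]; exact (pow_pos (hpos t) 2).ne'
    refine ((hsq t).sqrt h0).congr_deriv ?_
    rw [← hnorm, Real.sqrt_sq (norm_nonneg _)]
    have := (hpos t).ne'
    field_simp
  refine ⟨hr, fun t => ?_⟩
  set F : ℝ → ℝ := fun u => ((deriv γ u).im * (γ u).re - (deriv γ u).re * (γ u).im) *
    Real.exp (-((γ u).re ^ 2 + (γ u).im ^ 2) / 2) with hF
  have hFd : ∀ t, HasDerivAt F 0 t := by
    intro t
    refine ((((him2 t).mul (hre t)).sub ((hre2 t).mul (him t))).mul
      (((hsq t).neg.div_const 2).exp)).congr_deriv ?_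
    simp [hAL t, rinner]
    ring
  have hc : F t = F 0 := is_const_of_deriv_eq_zero (fun x => (hFd x).differentiableAt)
    (fun x => (hFd x).deriv) t 0
  have h0 : rinner (deriv γ 0) (Complex.I * γ 0) * Real.exp (-‖γ 0‖ ^ 2 / 2) = F 0 := by
    simp only [hF, hnorm]
    simp [rinner]
    ring
  rw [h0, ← hc, (hr t).deriv]
  have he : Real.exp (-‖γ t‖ ^ 2) =
      Real.exp (-((γ t).re ^ 2 + (γ t).im ^ 2) / 2) ^ 2 := by
    rw [← Real.exp_nat_mul, hnorm]
    congr 1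
    push_cast
    ring
  have h1 := hnorm (deriv γ t)
  rw [harc t] at h1
  have hm : ‖γ t‖ ^ 2 * (1 - (rinner (γ t) (deriv γ t) / ‖γ t‖) ^ 2) =
      ((deriv γ t).im * (γ t).re - (deriv γ t).re * (γ t).im) ^ 2 := by
    have h2 : ‖γ t‖ ^ 2 * (1 - (rinner (γ t) (deriv γ t) / ‖γ t‖) ^ 2) =
        ‖γ t‖ ^ 2 - rinner (γ t) (deriv γ t) ^ 2 := by
      have := (hpos t).ne'
      field_simp
    rw [h2, hnorm, rinner]
    linear_combination ((γ t).re ^ 2 + (γ t).im ^ 2) * h1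
  rw [hm, he, hF]
  ring
end

section
/- Let Γ₁, Γ₂ : ℝ → ℂ be smooth curves parametrized by arclength, each satisfying the Abresch–Langer self-shrinker equation Γᵢ''(t) = ⟨Γᵢ'(t), i·Γᵢ(t)⟩ · i·Γᵢ'(t). Then the product immersion φ : ℝ² → ℂ², φ(t₁,t₂) = (Γ₁(t₁), Γ₂(t₂)), satisfies the parametric self-shrinker equation H = −φ^⊥: for all (t₁,t₂), ∂₁²φ + ∂₂²φ = −( φ − ⟨φ, ∂₁φ⟩·∂₁φ − ⟨φ, ∂₂φ⟩·∂₂φ ), where ∂₁φ = (Γ₁'(t₁), 0) and ∂₂φ = (0, Γ₂'(t₂)) form an orthonormal frame, so that ∂₁²φ + ∂₂²φ is the mean curvature vector H and the right-hand side is minus the projection of the position vector φ onto the normal space. -/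
/-- Real inner product on ℂ² ≅ ℝ⁴. -/
noncomputable def rinner2 (u v : ℂ × ℂ) : ℝ := rinner u.1 v.1 + rinner u.2 v.2

theorem rinner_self_of_norm {u : ℂ} (h : ‖u‖ = 1) : u.re * u.re + u.im * u.im = 1 := by
  rw [← Complex.normSq_apply, Complex.normSq_eq_norm_sq, h]; norm_num

theorem al_normal (z u : ℂ) (h : u.re * u.re + u.im * u.im = 1) :
    (rinner u (Complex.I * z)) • (Complex.I * u) = -(z - rinner z u • u) := by
  apply Complex.ext
  · simp [rinner]
    linear_combination (-z.re) * h
  · simp [rinner]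
    linear_combination (-z.im) * h

/-- The product of two Abresch–Langer curves is a self-shrinker: with the
orthonormal frame ∂₁φ = (Γ₁', 0), ∂₂φ = (0, Γ₂'), the mean curvature vector
H = ∂₁²φ + ∂₂²φ equals minus the normal projection of the position vector φ. -/
theorem abresch_langer_product_self_shrinker (Γ₁ Γ₂ : ℝ → ℂ)
    (hs₁ : ContDiff ℝ (⊤ : ℕ∞) Γ₁) (hs₂ : ContDiff ℝ (⊤ : ℕ∞) Γ₂)
    (harc₁ : ∀ t, ‖deriv Γ₁ t‖ = 1) (harc₂ : ∀ t, ‖deriv Γ₂ t‖ = 1)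
    (hAL₁ : ∀ t, deriv (deriv Γ₁) t =
      (rinner (deriv Γ₁ t) (Complex.I * Γ₁ t)) • (Complex.I * deriv Γ₁ t))
    (hAL₂ : ∀ t, deriv (deriv Γ₂) t =
      (rinner (deriv Γ₂ t) (Complex.I * Γ₂ t)) • (Complex.I * deriv Γ₂ t)) :
    ∀ t₁ t₂ : ℝ,
      rinner2 ((deriv Γ₁ t₁, 0) : ℂ × ℂ) ((deriv Γ₁ t₁, 0) : ℂ × ℂ) = 1 ∧
      rinner2 (((0 : ℂ), deriv Γ₂ t₂) : ℂ × ℂ) (((0 : ℂ), deriv Γ₂ t₂) : ℂ × ℂ) = 1 ∧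
      rinner2 ((deriv Γ₁ t₁, 0) : ℂ × ℂ) (((0 : ℂ), deriv Γ₂ t₂) : ℂ × ℂ) = 0 ∧
      ((deriv (deriv Γ₁) t₁, deriv (deriv Γ₂) t₂) : ℂ × ℂ)
        = -(((Γ₁ t₁, Γ₂ t₂) : ℂ × ℂ)
            - (rinner2 ((Γ₁ t₁, Γ₂ t₂) : ℂ × ℂ) ((deriv Γ₁ t₁, 0) : ℂ × ℂ))
                • ((deriv Γ₁ t₁, 0) : ℂ × ℂ)
            - (rinner2 ((Γ₁ t₁, Γ₂ t₂) : ℂ × ℂ) (((0 : ℂ), deriv Γ₂ t₂) : ℂ × ℂ))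
                • (((0 : ℂ), deriv Γ₂ t₂) : ℂ × ℂ)) := by
  intro t₁ t₂
  have h₁ := rinner_self_of_norm (harc₁ t₁)
  have h₂ := rinner_self_of_norm (harc₂ t₂)
  refine ⟨?_, ?_, ?_, ?_⟩
  · simpa [rinner2, rinner] using h₁
  · simpa [rinner2, rinner] using h₂
  · simp [rinner2, rinner]
  · rw [hAL₁, hAL₂, al_normal _ _ h₁, al_normal _ _ h₂]
    ext <;> simp [rinner2, rinner]
end

section
/- Let Γ₁, Γ₂ : ℝ → ℂ be smooth curves parametrized by arclength, each satisfying the Abresch–Langer self-shrinker equation Γᵢ''(t) = ⟨Γᵢ'(t), i·Γᵢ(t)⟩ · i·Γᵢ'(t), and set ρᵢ = ⟨Γᵢ'(0), i·Γᵢ(0)⟩ · e^{−|Γᵢ(0)|²/2} for i = 1, 2. Then the squared norm of the mean curvature vector of the product immersion φ(t₁,t₂) = (Γ₁(t₁), Γ₂(t₂)) satisfies, for all (t₁,t₂): ‖(Γ₁''(t₁), Γ₂''(t₂))‖² = ⟨Γ₁'(t₁), i·Γ₁(t₁)⟩² + ⟨Γ₂'(t₂), i·Γ₂(t₂)⟩²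 = ρ₁²·e^{|Γ₁(t₁)|²} + ρ₂²·e^{|Γ₂(t₂)|²}. -/
theorem al_curve_aux (γ : ℝ → ℂ) (hs : ContDiff ℝ (⊤ : ℕ∞) γ)
    (harc : ∀ t, ‖deriv γ t‖ = 1)
    (hAL : ∀ t, deriv (deriv γ) t =
      (rinner (deriv γ t) (Complex.I * γ t)) • (Complex.I * deriv γ t)) (t : ℝ) :
    ‖deriv (deriv γ) t‖ ^ 2 = rinner (deriv γ t) (Complex.I * γ t) ^ 2 ∧
    rinner (deriv γ t) (Complex.I * γ t) ^ 2 =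
      (rinner (deriv γ 0) (Complex.I * γ 0) * Real.exp (-‖γ 0‖ ^ 2 / 2)) ^ 2
        * Real.exp (‖γ t‖ ^ 2) := by
  have hn : ∀ z : ℂ, ‖z‖ ^ 2 = z.re ^ 2 + z.im ^ 2 := fun z => by
    rw [Complex.sq_norm, Complex.normSq_apply]; ring
  have hd : ∀ t, HasDerivAt γ (deriv γ t) t := fun t =>
    (hs.differentiable (by simp) t).hasDerivAt
  have hs' : ContDiff ℝ (⊤ : ℕ∞) (deriv γ) := (contDiff_infty_iff_deriv.1 hs).2
  have hd' : ∀ t, HasDerivAt (deriv γ) (deriv (deriv γ) t) t := fun t =>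
    (hs'.differentiable (by simp) t).hasDerivAt
  have hre : ∀ {f : ℝ → ℂ} {f' : ℂ} {t : ℝ}, HasDerivAt f f' t →
      HasDerivAt (fun s => (f s).re) f'.re t := fun h =>
    Complex.reCLM.hasFDerivAt.comp_hasDerivAt _ h
  have him : ∀ {f : ℝ → ℂ} {f' : ℂ} {t : ℝ}, HasDerivAt f f' t →
      HasDerivAt (fun s => (f s).im) f'.im t := fun h =>
    Complex.imCLM.hasFDerivAt.comp_hasDerivAt _ h
  have hk : ∀ t, rinner (deriv γ t) (Complex.I * γ t)
      = (deriv γ t).im * (γ t).re - (deriv γ t).re * (γ t).im := fun t => by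
    simp [rinner]; ring
  refine ⟨by rw [hAL, norm_smul, norm_mul, harc]; simp, ?_⟩
  let G : ℝ → ℝ := fun t => ((deriv γ t).im * (γ t).re - (deriv γ t).re * (γ t).im)
    * Real.exp (-((γ t).re ^ 2 + (γ t).im ^ 2) / 2)
  have hG : ∀ t, HasDerivAt G 0 t := by
    intro t
    have h1 := ((him (hd' t)).mul (hre (hd t))).sub ((hre (hd' t)).mul (him (hd t)))
    have h2 := (((((hre (hd t)).pow 2).add ((him (hd t)).pow 2)).neg).div_const 2).exp
    have h3 := h1.mul h2
    refine h3.congr_deriv ?_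
    have e1 : (deriv (deriv γ) t).re = - (rinner (deriv γ t) (Complex.I * γ t)
      * (deriv γ t).im) := by rw [hAL]; simp
    have e2 : (deriv (deriv γ) t).im = rinner (deriv γ t) (Complex.I * γ t)
      * (deriv γ t).re := by rw [hAL]; simp
    rw [e1, e2, hk]
    simp
    ring
  have hc : G t = G 0 := is_const_of_deriv_eq_zero
    (fun t => (hG t).differentiableAt) (fun t => (hG t).deriv) t 0
  simp only [G] at hc
  rw [hk, hk, hn, hn, ← hc, mul_pow, mul_assoc, ← Real.exp_nat_mul, ← Real.exp_add]
  have : ((2 : ℕ) : ℝ) * (-((γ t).re ^ 2 + (γ t).im ^ 2) / 2)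
      + ((γ t).re ^ 2 + (γ t).im ^ 2) = 0 := by push_cast; ring
  rw [this]; simp

/-- The squared norm of the mean curvature vector H = (Γ₁''(t₁), Γ₂''(t₂)) of the
product of two Abresch–Langer curves equals ⟨Γ₁', iΓ₁⟩² + ⟨Γ₂', iΓ₂⟩²
= ρ₁² e^{|Γ₁|²} + ρ₂² e^{|Γ₂|²}. -/
theorem abresch_langer_product_mean_curvature (Γ₁ Γ₂ : ℝ → ℂ)
    (hs₁ : ContDiff ℝ (⊤ : ℕ∞) Γ₁) (hs₂ : ContDiff ℝ (⊤ : ℕ∞) Γ₂)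
    (harc₁ : ∀ t, ‖deriv Γ₁ t‖ = 1) (harc₂ : ∀ t, ‖deriv Γ₂ t‖ = 1)
    (hAL₁ : ∀ t, deriv (deriv Γ₁) t =
      (rinner (deriv Γ₁ t) (Complex.I * Γ₁ t)) • (Complex.I * deriv Γ₁ t))
    (hAL₂ : ∀ t, deriv (deriv Γ₂) t =
      (rinner (deriv Γ₂ t) (Complex.I * Γ₂ t)) • (Complex.I * deriv Γ₂ t)) :
    ∀ t₁ t₂ : ℝ,
      ‖deriv (deriv Γ₁) t₁‖ ^ 2 + ‖deriv (deriv Γ₂) t₂‖ ^ 2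
        = rinner (deriv Γ₁ t₁) (Complex.I * Γ₁ t₁) ^ 2
          + rinner (deriv Γ₂ t₂) (Complex.I * Γ₂ t₂) ^ 2 ∧
      ‖deriv (deriv Γ₁) t₁‖ ^ 2 + ‖deriv (deriv Γ₂) t₂‖ ^ 2
        = (rinner (deriv Γ₁ 0) (Complex.I * Γ₁ 0) * Real.exp (-‖Γ₁ 0‖ ^ 2 / 2)) ^ 2
            * Real.exp (‖Γ₁ t₁‖ ^ 2)
          + (rinner (deriv Γ₂ 0) (Complex.I * Γ₂ 0) * Real.exp (-‖Γ₂ 0‖ ^ 2 / 2)) ^ 2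
            * Real.exp (‖Γ₂ t₂‖ ^ 2) := by
  intro t₁ t₂
  obtain ⟨a₁, b₁⟩ := al_curve_aux Γ₁ hs₁ harc₁ hAL₁ t₁
  obtain ⟨a₂, b₂⟩ := al_curve_aux Γ₂ hs₂ harc₂ hAL₂ t₂
  exact ⟨by rw [a₁, a₂], by rw [a₁, a₂, b₁, b₂]⟩
end

section
/- Let γ : ℝ → ℂ be a smooth curve parametrized by arclength with γ(t) ≠ 0 for all t, satisfying the Anciaux equation γ''(t) = ⟨γ'(t), i·γ(t)⟩·((|γ(t)|² − 1)/|γ(t)|²) · i·γ'(t). Then the function t ↦ |γ(t)| · ⟨γ'(t), i·γ(t)⟩ · e^{−|γ(t)|²/2} is constant on ℝ, equal to E := |γ(0)|·⟨γ'(0), i·γ(0)⟩·e^{−|γ(0)|²/2}; consequently, writing r(t) = |γ(t)|, the curvature κ(t) = ⟨γ''(t), i·γ'(t)⟩ satisfies κ(t) = E·e^{r(t)²/2}·(r(t)² − 1)/r(t)³ for all t. -/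
/-- For a nonvanishing smooth arclength-parametrized curve satisfying the Anciaux
equation γ'' = ⟨γ', iγ⟩((|γ|²-1)/|γ|²) iγ', the quantity |γ|⟨γ', iγ⟩e^{-|γ|²/2} is
constant equal to E, and the curvature κ = ⟨γ'', iγ'⟩ equals E e^{r²/2}(r²-1)/r³. -/
theorem anciaux_curvature (γ : ℝ → ℂ) (hsmooth : ContDiff ℝ (⊤ : ℕ∞) γ)
    (harc : ∀ t, ‖deriv γ t‖ = 1) (hne : ∀ t, γ t ≠ 0)
    (hAnc : ∀ t, deriv (deriv γ) t =
      (rinner (deriv γ t) (Complex.I * γ t) * ((‖γ t‖ ^ 2 - 1) / ‖γ t‖ ^ 2))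
        • (Complex.I * deriv γ t)) :
    (∀ t, ‖γ t‖ * rinner (deriv γ t) (Complex.I * γ t) * Real.exp (-‖γ t‖ ^ 2 / 2)
        = ‖γ 0‖ * rinner (deriv γ 0) (Complex.I * γ 0) * Real.exp (-‖γ 0‖ ^ 2 / 2)) ∧
    (∀ t, rinner (deriv (deriv γ) t) (Complex.I * deriv γ t)
        = (‖γ 0‖ * rinner (deriv γ 0) (Complex.I * γ 0) * Real.exp (-‖γ 0‖ ^ 2 / 2))
            * Real.exp (‖γ t‖ ^ 2 / 2) * (‖γ t‖ ^ 2 - 1) / ‖γ t‖ ^ 3) := by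
  have hd1 : ∀ t, HasDerivAt γ (deriv γ t) t := fun t =>
    ((hsmooth.differentiable (by simp)) t).hasDerivAt
  have hsm' : ContDiff ℝ 1 (deriv γ) :=
    ((contDiff_succ_iff_deriv (n := 1)).1 (hsmooth.of_le (by
      norm_cast))).2.2
  have hd2 : ∀ t, HasDerivAt (deriv γ) (deriv (deriv γ) t) t := fun t =>
    ((hsm'.differentiable (by simp)) t).hasDerivAt
  have hre : ∀ (f : ℝ → ℂ) (f' : ℂ) t, HasDerivAt f f' t →
      HasDerivAt (fun t => (f t).re) f'.re t := fun f f' t h => by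
    exact Complex.reCLM.hasFDerivAt.comp_hasDerivAt t h
  have him : ∀ (f : ℝ → ℂ) (f' : ℂ) t, HasDerivAt f f' t →
      HasDerivAt (fun t => (f t).im) f'.im t := fun f f' t h => by
    exact Complex.imCLM.hasFDerivAt.comp_hasDerivAt t h
  have hr : ∀ t, 0 < ‖γ t‖ := fun t => norm_pos_iff.2 (hne t)
  have hsq : ∀ z : ℂ, ‖z‖ ^ 2 = z.re ^ 2 + z.im ^ 2 := fun z => by
    rw [Complex.sq_norm, Complex.normSq_apply]; ring
  have hS : ∀ t, HasDerivAt (fun t => ‖γ t‖ ^ 2)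
      (2 * ((γ t).re * (deriv γ t).re + (γ t).im * (deriv γ t).im)) t := fun t => by
    simp only [hsq]
    refine (((hre _ _ t (hd1 t)).pow 2).add ((him _ _ t (hd1 t)).pow 2)).congr_deriv ?_
    push_cast; ring
  have hR : ∀ t, HasDerivAt (fun t => ‖γ t‖)
      (((γ t).re * (deriv γ t).re + (γ t).im * (deriv γ t).im) / ‖γ t‖) t := fun t => by
    have h := (hS t).sqrt (pow_pos (hr t) 2).ne'
    simp only [Real.sqrt_sq (norm_nonneg _)] at h
    refine h.congr_deriv ?_
    have := (hr t).ne'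
    field_simp
  have hA : ∀ t, HasDerivAt (fun t => rinner (deriv γ t) (Complex.I * γ t))
      (rinner (deriv γ t) (Complex.I * γ t) * ((‖γ t‖ ^ 2 - 1) / ‖γ t‖ ^ 2) *
        ((γ t).re * (deriv γ t).re + (γ t).im * (deriv γ t).im)) t := fun t => by
    have h2 := hd2 t
    rw [hAnc t] at h2
    generalize rinner (deriv γ t) (Complex.I * γ t) * ((‖γ t‖ ^ 2 - 1) / ‖γ t‖ ^ 2) = k at h2 ⊢
    have hu := hre _ _ t h2
    have hv := him _ _ t h2
    have hx := hre _ _ t (hd1 t)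
    have hy := him _ _ t (hd1 t)
    have h := (hu.mul hy.neg).add (hv.mul hx)
    simp only [rinner, Complex.mul_re, Complex.mul_im, Complex.I_re, Complex.I_im, zero_mul,
      one_mul, zero_sub, zero_add]
    refine h.congr_deriv ?_
    simp
    ring
  have hconst : ∀ t, ‖γ t‖ * rinner (deriv γ t) (Complex.I * γ t) * Real.exp (-‖γ t‖ ^ 2 / 2)
        = ‖γ 0‖ * rinner (deriv γ 0) (Complex.I * γ 0) * Real.exp (-‖γ 0‖ ^ 2 / 2) := by
    have hF : ∀ t, HasDerivAt (fun t => ‖γ t‖ * rinner (deriv γ t) (Complex.I * γ t) *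
        Real.exp (-‖γ t‖ ^ 2 / 2)) 0 t := fun t => by
      refine (((hR t).mul (hA t)).mul (((hS t).neg.div_const 2).exp)).congr_deriv ?_
      have := (hr t).ne'
      simp only [Pi.mul_apply, Pi.neg_apply]
      field_simp
      ring
    intro t
    exact is_const_of_deriv_eq_zero (fun t => (hF t).differentiableAt)
      (fun t => (hF t).deriv) t 0
  refine ⟨hconst, fun t => ?_⟩
  rw [← hconst t, hAnc t]
  have h1 : (deriv γ t).re ^ 2 + (deriv γ t).im ^ 2 = 1 := by
    rw [← hsq, harc t]; norm_num
  have he : Real.exp (-‖γ t‖ ^ 2 / 2) * Real.exp (‖γ t‖ ^ 2 / 2) = 1 := by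
    rw [← Real.exp_add, ← Real.exp_zero]; congr 1; ring
  generalize rinner (deriv γ t) (Complex.I * γ t) = a
  have hk : ∀ k : ℝ, rinner (k • (Complex.I * deriv γ t)) (Complex.I * deriv γ t) = k := by
    intro k
    simp [rinner]
    linear_combination k * h1
  rw [hk, mul_assoc (‖γ t‖ * a), he]
  have := (hr t).ne'
  field_simp
end

section
/- Let γ : ℝ → ℂ be a smooth curve parametrized by arclength with γ(t) ≠ 0 for all t, satisfying the Anciaux equation γ''(t) = ⟨γ'(t), i·γ(t)⟩·((|γ(t)|² − 1)/|γ(t)|²) · i·γ'(t). Set r(t) = |γ(t)| (which is differentiable with r'(t) = ⟨γ(t), γ'(t)⟩/r(t)). Then the function t ↦ r(t)⁴·(1 − r'(t)²)·e^{−r(t)²} is constant on ℝ, equal to E² where E = |γ(0)|·⟨γ'(0), i·γ(0)⟩·e^{−|γ(0)|²/2}. -/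
/-- For a nonvanishing smooth arclength-parametrized curve satisfying the Anciaux
equation, with r = |γ| (differentiable with r' = ⟨γ,γ'⟩/r), the quantity
r⁴(1 - r'²)e^{-r²} is constant, equal to E² with E = |γ(0)|⟨γ'(0), iγ(0)⟩e^{-|γ(0)|²/2}. -/
theorem anciaux_first_integral (γ : ℝ → ℂ) (hsmooth : ContDiff ℝ (⊤ : ℕ∞) γ)
    (harc : ∀ t, ‖deriv γ t‖ = 1) (hne : ∀ t, γ t ≠ 0)
    (hAnc : ∀ t, deriv (deriv γ) t =
      (rinner (deriv γ t) (Complex.I * γ t) * ((‖γ t‖ ^ 2 - 1) / ‖γ t‖ ^ 2))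
        • (Complex.I * deriv γ t)) :
    (∀ t, HasDerivAt (fun u => ‖γ u‖) (rinner (γ t) (deriv γ t) / ‖γ t‖) t) ∧
    (∀ t, ‖γ t‖ ^ 4 * (1 - (deriv (fun u => ‖γ u‖) t) ^ 2) * Real.exp (-‖γ t‖ ^ 2)
        = (‖γ 0‖ * rinner (deriv γ 0) (Complex.I * γ 0)
            * Real.exp (-‖γ 0‖ ^ 2 / 2)) ^ 2) := by
  have hd : Differentiable ℝ γ := hsmooth.differentiable (by simp)
  have hd2 : Differentiable ℝ (deriv γ) := by
    have h2 : ContDiff ℝ 2 γ := hsmooth.of_le (by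
      have : ((2 : ℕ∞) : WithTop ℕ∞) ≤ ((⊤ : ℕ∞) : WithTop ℕ∞) := WithTop.coe_le_coe.2 le_top
      exact this)
    have h1 : ContDiff ℝ 1 (deriv γ) := by
      have h3 : ContDiff ℝ (1 + 1) γ := by
        convert h2 using 1
        norm_num
      exact (contDiff_succ_iff_deriv.1 h3).2.2
    exact h1.differentiable (by simp)
  have hx : ∀ t, HasDerivAt (fun u => (γ u).re) (deriv γ t).re t := fun t =>
    Complex.reCLM.hasFDerivAt.comp_hasDerivAt t (hd t).hasDerivAt
  have hy : ∀ t, HasDerivAt (fun u => (γ u).im) (deriv γ t).im t := fun t =>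
    Complex.imCLM.hasFDerivAt.comp_hasDerivAt t (hd t).hasDerivAt
  have ha : ∀ t, HasDerivAt (fun u => (deriv γ u).re) (deriv (deriv γ) t).re t := fun t =>
    Complex.reCLM.hasFDerivAt.comp_hasDerivAt t (hd2 t).hasDerivAt
  have hb : ∀ t, HasDerivAt (fun u => (deriv γ u).im) (deriv (deriv γ) t).im t := fun t =>
    Complex.imCLM.hasFDerivAt.comp_hasDerivAt t (hd2 t).hasDerivAt
  have hsq : ∀ z : ℂ, ‖z‖ ^ 2 = z.re ^ 2 + z.im ^ 2 := by
    intro z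
    rw [Complex.sq_norm, Complex.normSq_apply]
    ring
  have hR : ∀ t, HasDerivAt (fun u => ‖γ u‖ ^ 2) (2 * rinner (γ t) (deriv γ t)) t := by
    intro t
    have h := ((hx t).pow 2).add ((hy t).pow 2)
    have e : (fun u => ‖γ u‖ ^ 2) = (fun u => (γ u).re) ^ 2 + (fun u => (γ u).im) ^ 2 := by
      funext u
      simp [hsq]
    rw [e]
    refine h.congr_deriv ?_
    symm
    simp only [rinner]
    push_cast
    ring
  have hr : ∀ t, HasDerivAt (fun u => ‖γ u‖) (rinner (γ t) (deriv γ t) / ‖γ t‖) t := by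
    intro t
    have hpos : 0 < ‖γ t‖ := norm_pos_iff.2 (hne t)
    have h := (hR t).sqrt (by positivity)
    simp only [Real.sqrt_sq (norm_nonneg _)] at h
    refine h.congr_deriv ?_
    symm
    field_simp
  refine ⟨hr, ?_⟩
  let F : ℝ → ℝ := fun t => ‖γ t‖ ^ 2 * (rinner (deriv γ t) (Complex.I * γ t)) ^ 2
    * Real.exp (-‖γ t‖ ^ 2)
  have hw : ∀ t, HasDerivAt (fun u => rinner (deriv γ u) (Complex.I * γ u))
      (rinner (deriv γ t) (Complex.I * γ t) * ((‖γ t‖ ^ 2 - 1) / ‖γ t‖ ^ 2)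
        * rinner (γ t) (deriv γ t)) t := by
    intro t
    have h := ((hb t).mul (hx t)).sub ((ha t).mul (hy t))
    have e : (fun u => rinner (deriv γ u) (Complex.I * γ u)) =
        (fun u => (deriv γ u).im) * (fun u => (γ u).re)
          - (fun u => (deriv γ u).re) * (fun u => (γ u).im) := by
      funext u
      simp [rinner]
      ring
    rw [e]
    refine h.congr_deriv ?_
    symm
    rw [hAnc t]
    generalize rinner (deriv γ t) (Complex.I * γ t) * ((‖γ t‖ ^ 2 - 1) / ‖γ t‖ ^ 2) = k
    simp [rinner]
    ring
  have hF : ∀ t, HasDerivAt F 0 t := by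
    intro t
    have hpos : ‖γ t‖ ≠ 0 := norm_ne_zero_iff.2 (hne t)
    have h := ((hR t).mul ((hw t).pow 2)).mul (hR t).neg.exp
    refine h.congr_deriv ?_
    simp only [Pi.mul_apply, Pi.pow_apply, Pi.neg_apply]
    push_cast
    field_simp
    ring
  have hconst : ∀ t, F t = F 0 := fun t =>
    is_const_of_deriv_eq_zero (fun t => (hF t).differentiableAt) (fun t => (hF t).deriv) t 0
  intro t
  have hpos : ‖γ t‖ ≠ 0 := norm_ne_zero_iff.2 (hne t)
  have h0 : (‖γ 0‖ * rinner (deriv γ 0) (Complex.I * γ 0)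
            * Real.exp (-‖γ 0‖ ^ 2 / 2)) ^ 2 = F 0 := by
    have : Real.exp (-‖γ 0‖ ^ 2 / 2) ^ 2 = Real.exp (-‖γ 0‖ ^ 2) := by
      rw [← Real.exp_nat_mul]
      congr 1
      push_cast
      ring
    simp only [F]
    rw [← this]
    ring
  rw [h0, ← hconst t, (hr t).deriv]
  simp only [F]
  congr 1
  have e1 : ‖γ t‖ ^ 4 * (1 - (rinner (γ t) (deriv γ t) / ‖γ t‖) ^ 2)
      = ‖γ t‖ ^ 2 * (‖γ t‖ ^ 2 - rinner (γ t) (deriv γ t) ^ 2) := by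
    field_simp
  rw [e1]
  congr 1
  have e2 : (deriv γ t).re ^ 2 + (deriv γ t).im ^ 2 = 1 := by
    rw [← hsq, harc t]
    norm_num
  rw [hsq]
  simp [rinner]
  linear_combination (-(γ t).re ^ 2 - (γ t).im ^ 2) * e2
end

section
/- The curve γ : ℝ → ℂ given by γ(t) = √2·e^{it/√2} is parametrized by arclength (‖γ'(t)‖ = 1 for all t) and satisfies the Anciaux equation γ''(t) = ⟨γ'(t), i·γ(t)⟩·((|γ(t)|² − 1)/|γ(t)|²) · i·γ'(t) for all t; its curvature is the constant 1/√2 and |γ(t)|² = 2. (This is the profile curve whose associated Anciaux immersion is the Clifford torus.) -/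
/-- The profile curve γ(t) = √2 e^{it/√2} of the Clifford torus. -/
noncomputable def cliffordCurve : ℝ → ℂ :=
  fun t => (Real.sqrt 2 : ℂ) * Complex.exp (Complex.I * t / (Real.sqrt 2 : ℂ))

theorem sqrt_two_cast_ne : ((Real.sqrt 2 : ℝ) : ℂ) ≠ 0 := by
  have : Real.sqrt 2 ≠ 0 := by positivity
  exact_mod_cast this

theorem hasDerivAt_cliffordExp (t : ℝ) :
    HasDerivAt (fun t : ℝ => Complex.exp (Complex.I * t / (Real.sqrt 2 : ℂ)))
      (Complex.exp (Complex.I * t / (Real.sqrt 2 : ℂ)) * (Complex.I / (Real.sqrt 2 : ℂ))) t := by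
  have h1 : HasDerivAt (fun t : ℝ => (t : ℂ)) 1 t := Complex.ofRealCLM.hasDerivAt
  have h2 := ((h1.const_mul Complex.I).div_const (Real.sqrt 2 : ℂ)).cexp
  simpa using h2

theorem deriv_cliffordCurve : deriv cliffordCurve =
    fun t : ℝ => Complex.I * Complex.exp (Complex.I * t / (Real.sqrt 2 : ℂ)) := by
  funext t
  have h := ((hasDerivAt_cliffordExp t).const_mul (Real.sqrt 2 : ℂ)).deriv
  have hs := sqrt_two_cast_ne
  unfold cliffordCurve
  rw [h]
  field_simp

theorem deriv_deriv_cliffordCurve (t : ℝ) : deriv (deriv cliffordCurve) t =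
    ((-(1 / Real.sqrt 2) : ℝ) : ℂ) * Complex.exp (Complex.I * t / (Real.sqrt 2 : ℂ)) := by
  rw [deriv_cliffordCurve, ((hasDerivAt_cliffordExp t).const_mul Complex.I).deriv]
  have hs := sqrt_two_cast_ne
  push_cast
  field_simp
  rw [Complex.I_sq]

theorem norm_cliffordExp (t : ℝ) :
    ‖Complex.exp (Complex.I * t / (Real.sqrt 2 : ℂ))‖ = 1 := by
  have : Complex.I * t / (Real.sqrt 2 : ℂ) = ((t / Real.sqrt 2 : ℝ) : ℂ) * Complex.I := by
    push_cast
    ring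
  rw [this, Complex.norm_exp_ofReal_mul_I]

theorem norm_sq_cliffordCurve (t : ℝ) : ‖cliffordCurve t‖ ^ 2 = 2 := by
  unfold cliffordCurve
  rw [norm_mul, norm_cliffordExp, Complex.norm_real, mul_one, Real.norm_eq_abs, sq_abs]
  exact Real.sq_sqrt (by norm_num)

theorem re_im_sq_cliffordExp (t : ℝ) :
    (Complex.exp (Complex.I * t / (Real.sqrt 2 : ℂ))).re ^ 2 +
      (Complex.exp (Complex.I * t / (Real.sqrt 2 : ℂ))).im ^ 2 = 1 := by
  have h := Complex.sq_norm (Complex.exp (Complex.I * t / (Real.sqrt 2 : ℂ)))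
  rw [norm_cliffordExp, Complex.normSq_apply] at h
  linarith

/-- The curve γ(t) = √2 e^{it/√2} is parametrized by arclength, satisfies the
Anciaux equation, has constant curvature 1/√2 and |γ|² = 2.  (It is the profile
curve of the Clifford torus among the Anciaux tori.) -/
theorem clifford_profile_curve :
    (∀ t, ‖deriv cliffordCurve t‖ = 1) ∧
    (∀ t, deriv (deriv cliffordCurve) t =
      (rinner (deriv cliffordCurve t) (Complex.I * cliffordCurve t)
          * ((‖cliffordCurve t‖ ^ 2 - 1) / ‖cliffordCurve t‖ ^ 2))
        • (Complex.I * deriv cliffordCurve t)) ∧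
    (∀ t, rinner (deriv (deriv cliffordCurve) t) (Complex.I * deriv cliffordCurve t)
        = 1 / Real.sqrt 2) ∧
    (∀ t, ‖cliffordCurve t‖ ^ 2 = 2) := by
  refine ⟨fun t => ?_, fun t => ?_, fun t => ?_, norm_sq_cliffordCurve⟩
  · rw [deriv_cliffordCurve]
    simp only [norm_mul, Complex.norm_I, norm_cliffordExp, mul_one]
  · have hr : rinner (deriv cliffordCurve t) (Complex.I * cliffordCurve t) = Real.sqrt 2 := by
      have h := re_im_sq_cliffordExp t
      rw [deriv_cliffordCurve]
      unfold cliffordCurve rinner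
      simp only [Complex.mul_re, Complex.mul_im, Complex.I_re, Complex.I_im,
        Complex.ofReal_re, Complex.ofReal_im]
      linear_combination (Real.sqrt 2) * h
    rw [hr, norm_sq_cliffordCurve, deriv_deriv_cliffordCurve, deriv_cliffordCurve,
      Complex.real_smul]
    have h2 : Real.sqrt 2 * ((2 - 1) / 2) = 1 / Real.sqrt 2 := by
      have : Real.sqrt 2 ≠ 0 := by positivity
      field_simp
      rw [Real.sq_sqrt (by norm_num)]
      norm_num
    rw [h2]
    simp only [← mul_assoc]
    rw [mul_assoc (((1 / Real.sqrt 2 : ℝ)) : ℂ), Complex.I_mul_I]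
    push_cast
    ring
  · have h := re_im_sq_cliffordExp t
    rw [deriv_deriv_cliffordCurve, deriv_cliffordCurve]
    unfold rinner
    simp only [Complex.mul_re, Complex.mul_im, Complex.I_re, Complex.I_im,
      Complex.ofReal_re, Complex.ofReal_im]
    linear_combination (1 / Real.sqrt 2) * h
end

section
/- Let γ : ℝ → ℂ be a smooth curve parametrized by arclength with γ(t) ≠ 0 for all t, satisfying the Anciaux equation γ''(t) = ⟨γ'(t), i·γ(t)⟩·((|γ(t)|² − 1)/|γ(t)|²) · i·γ'(t). Then the Anciaux immersion φ(t,s) = γ(t)·(cos s, sin s) satisfies the parametric self-shrinker equation H = −φ^⊥: for all (t,s), ∂_t²φ + (⟨γ(t), γ'(t)⟩/|γ(t)|²)·∂_tφ + (1/|γ(t)|²)·∂_s²φ = −φ + ⟨φ, ∂_tφ⟩·∂_tφ. Here the left-hand side is the mean curvature vector H of φ (the Laplace–Beltrami operator of the induced metric dt² + |γ(t)|²ds² applied to φ), ∂_tφ and ∂_sφ are orthogonal with ‖∂_tφ‖ = 1, ‖∂_sφ‖ = |γ(t)|, and the right-hand side is minus the projection of the position vector φ onto the normal space. -/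
/-- Partial derivative of F : ℝ² → ℂ² in the first variable. -/
noncomputable def pd1 (F : ℝ → ℝ → ℂ × ℂ) (a b : ℝ) : ℂ × ℂ := deriv (fun x => F x b) a

/-- Partial derivative of F : ℝ² → ℂ² in the second variable. -/
noncomputable def pd2 (F : ℝ → ℝ → ℂ × ℂ) (a b : ℝ) : ℂ × ℂ := deriv (fun y => F a y) b

/-- The Anciaux immersion φ(t,s) = γ(t)(cos s, sin s). -/
noncomputable def anciauxMap (γ : ℝ → ℂ) (t s : ℝ) : ℂ × ℂ :=
  (γ t * Real.cos s, γ t * Real.sin s)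

theorem anciaux_pd1 (γ : ℝ → ℂ) (hd : Differentiable ℝ γ) :
    pd1 (anciauxMap γ) = anciauxMap (deriv γ) := by
  funext t s
  exact (((hd t).hasDerivAt.mul_const _).prodMk ((hd t).hasDerivAt.mul_const _)).deriv

theorem anciaux_pd2 (γ : ℝ → ℂ) :
    pd2 (anciauxMap γ) = fun t s => (γ t * ((-Real.sin s : ℝ) : ℂ), γ t * Real.cos s) := by
  funext t s
  exact (((Real.hasDerivAt_cos s).ofReal_comp.const_mul (γ t)).prodMk
    ((Real.hasDerivAt_sin s).ofReal_comp.const_mul (γ t))).deriv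

theorem anciaux_pd22 (γ : ℝ → ℂ) :
    pd2 (pd2 (anciauxMap γ)) = fun t s => - anciauxMap γ t s := by
  rw [anciaux_pd2]
  funext t s
  refine (((Real.hasDerivAt_sin s).neg.ofReal_comp.const_mul (γ t)).prodMk
    ((Real.hasDerivAt_cos s).ofReal_comp.const_mul (γ t))).deriv.trans ?_
  simp [anciauxMap]

theorem anciaux_key (g T A : ℂ) (hT : ‖T‖ = 1) (hg : g ≠ 0)
    (hA : A = (rinner T (Complex.I * g) * ((‖g‖ ^ 2 - 1) / ‖g‖ ^ 2)) • (Complex.I * T)) :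
    A + (rinner g T / ‖g‖ ^ 2) • T - (1 / ‖g‖ ^ 2) • g = -g + rinner g T • T := by
  have h1 : T.re * T.re + T.im * T.im = 1 := by
    rw [← Complex.normSq_apply, Complex.normSq_eq_norm_sq, hT]; norm_num
  have h2 : ‖g‖ ^ 2 ≠ 0 := by simpa using hg
  have h3 : ‖g‖ ^ 2 = g.re * g.re + g.im * g.im := by
    rw [← Complex.normSq_apply, Complex.normSq_eq_norm_sq]
  generalize ‖g‖ ^ 2 = r at *
  subst hA
  apply Complex.ext <;> simp [rinner] <;> field_simp
  · linear_combination (g.re - g.re * r) * h1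
  · linear_combination (g.im - g.im * r) * h1

/-- If γ is an arclength-parametrized nonvanishing solution of the Anciaux
equation, then φ(t,s) = γ(t)(cos s, sin s) satisfies H = -φ^⊥: the coordinate
vectors ∂ₜφ, ∂ₛφ are orthogonal with ‖∂ₜφ‖ = 1, ‖∂ₛφ‖ = |γ|, and the mean
curvature vector ∂ₜ²φ + (⟨γ,γ'⟩/|γ|²)∂ₜφ + (1/|γ|²)∂ₛ²φ equals
-φ + ⟨φ, ∂ₜφ⟩∂ₜφ, minus the normal projection of the position vector. -/
theorem anciaux_self_shrinker (γ : ℝ → ℂ) (hsmooth : ContDiff ℝ (⊤ : ℕ∞) γ)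
    (harc : ∀ t, ‖deriv γ t‖ = 1) (hne : ∀ t, γ t ≠ 0)
    (hAnc : ∀ t, deriv (deriv γ) t =
      (rinner (deriv γ t) (Complex.I * γ t) * ((‖γ t‖ ^ 2 - 1) / ‖γ t‖ ^ 2))
        • (Complex.I * deriv γ t)) :
    ∀ t s : ℝ,
      rinner2 (pd1 (anciauxMap γ) t s) (pd2 (anciauxMap γ) t s) = 0 ∧
      rinner2 (pd1 (anciauxMap γ) t s) (pd1 (anciauxMap γ) t s) = 1 ∧
      rinner2 (pd2 (anciauxMap γ) t s) (pd2 (anciauxMap γ) t s) = ‖γ t‖ ^ 2 ∧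
      pd1 (pd1 (anciauxMap γ)) t s
          + (rinner (γ t) (deriv γ t) / ‖γ t‖ ^ 2) • pd1 (anciauxMap γ) t s
          + (1 / ‖γ t‖ ^ 2) • pd2 (pd2 (anciauxMap γ)) t s
        = -anciauxMap γ t s
          + (rinner2 (anciauxMap γ t s) (pd1 (anciauxMap γ) t s))
              • pd1 (anciauxMap γ) t s := by
  have hd : Differentiable ℝ γ := hsmooth.differentiable (by simp)
  have hd2 : Differentiable ℝ (deriv γ) := by
    have h : ContDiff ℝ (1 + 1) γ := by
      rw [one_add_one_eq_two]; exact contDiff_infty.1 hsmooth 2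
    exact (contDiff_succ_iff_deriv.1 h).2.2.differentiable (by simp)
  intro t s
  have h1 : (deriv γ t).re * (deriv γ t).re + (deriv γ t).im * (deriv γ t).im = 1 := by
    rw [← Complex.normSq_apply, Complex.normSq_eq_norm_sq, harc]; norm_num
  have h3 : ‖γ t‖ ^ 2 = (γ t).re * (γ t).re + (γ t).im * (γ t).im := by
    rw [← Complex.normSq_apply, Complex.normSq_eq_norm_sq]
  have hs := Real.sin_sq_add_cos_sq s
  have key := anciaux_key _ _ _ (harc t) (hne t) (hAnc t)
  have hin : rinner2 (anciauxMap γ t s) (anciauxMap (deriv γ) t s) = rinner (γ t) (deriv γ t) := by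
    simp only [rinner2, rinner, anciauxMap, Complex.re_mul_ofReal, Complex.im_mul_ofReal]
    linear_combination ((γ t).re * (deriv γ t).re + (γ t).im * (deriv γ t).im) * hs
  rw [anciaux_pd22, anciaux_pd1 γ hd, anciaux_pd1 _ hd2, anciaux_pd2, hin]
  refine ⟨?_, ?_, ?_, ?_⟩
  · simp only [rinner2, rinner, anciauxMap, Complex.re_mul_ofReal, Complex.im_mul_ofReal]
    ring
  · simp only [rinner2, rinner, anciauxMap, Complex.re_mul_ofReal, Complex.im_mul_ofReal]
    linear_combination h1 + ((deriv γ t).re ^ 2 + (deriv γ t).im ^ 2) * hs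
  · rw [h3]
    simp only [rinner2, rinner, Complex.re_mul_ofReal, Complex.im_mul_ofReal]
    linear_combination ((γ t).re ^ 2 + (γ t).im ^ 2) * hs
  · simp only [Complex.real_smul] at key
    apply Prod.ext
    · simp only [anciauxMap, Prod.fst_add, Prod.smul_fst, Prod.fst_neg, Complex.real_smul]
      linear_combination (Real.cos s : ℂ) * key
    · simp only [anciauxMap, Prod.snd_add, Prod.smul_snd, Prod.snd_neg, Complex.real_smul]
      linear_combination (Real.sin s : ℂ) * key
end

section
/- Let γ : ℝ → ℂ be a smooth curve parametrized by arclength with γ(t) ≠ 0 for all t, satisfying the Anciaux equation γ''(t) = ⟨γ'(t), i·γ(t)⟩·((|γ(t)|² − 1)/|γ(t)|²) · i·γ'(t), and set E = |γ(0)|·⟨γ'(0), i·γ(0)⟩·e^{−|γ(0)|²/2} and r(t) = |γ(t)|. Then the squared norm of the mean curvature vector of the Anciaux immersion φ(t,s) = γ(t)·(cos s, sin s) satisfies, for all (t,s): ‖∂_t²φ + (⟨γ(t), γ'(t)⟩/r(t)²)·∂_tφ + (1/r(t)²)·∂_s²φ‖² = E²·e^{r(t)²}/r(t)². -/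
/-- Squared Euclidean norm on ℂ² ≅ ℝ⁴. -/
noncomputable def norm2 (v : ℂ × ℂ) : ℝ := ‖v.1‖ ^ 2 + ‖v.2‖ ^ 2

lemma anc_aux_conserved (γ : ℝ → ℂ) (hd : ∀ t, HasDerivAt γ (deriv γ t) t)
    (hdd : ∀ t, HasDerivAt (deriv γ) (deriv (deriv γ) t) t) (hne : ∀ t, γ t ≠ 0)
    (hAnc : ∀ t, deriv (deriv γ) t =
      (rinner (deriv γ t) (Complex.I * γ t) * ((‖γ t‖ ^ 2 - 1) / ‖γ t‖ ^ 2))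
        • (Complex.I * deriv γ t)) (t : ℝ) :
    rinner (deriv γ t) (Complex.I * γ t) ^ 2 * ‖γ t‖ ^ 2 * Real.exp (-‖γ t‖ ^ 2)
    = rinner (deriv γ 0) (Complex.I * γ 0) ^ 2 * ‖γ 0‖ ^ 2 * Real.exp (-‖γ 0‖ ^ 2) := by
  have hre : ∀ (f : ℝ → ℂ) (f' : ℂ) (t : ℝ), HasDerivAt f f' t →
      HasDerivAt (fun t => (f t).re) f'.re t := fun f f' t h =>
    (Complex.reCLM.hasFDerivAt.comp_hasDerivAt t h)
  have him : ∀ (f : ℝ → ℂ) (f' : ℂ) (t : ℝ), HasDerivAt f f' t →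
      HasDerivAt (fun t => (f t).im) f'.im t := fun f f' t h =>
    (Complex.imCLM.hasFDerivAt.comp_hasDerivAt t h)
  have hn : ∀ z : ℂ, ‖z‖ ^ 2 = z.re * z.re + z.im * z.im := fun z => by
    rw [Complex.sq_norm, Complex.normSq_apply]
  have key : ∀ t, HasDerivAt (fun t => rinner (deriv γ t) (Complex.I * γ t) ^ 2 * ‖γ t‖ ^ 2
      * Real.exp (-‖γ t‖ ^ 2)) 0 t := by
    intro t
    have hr : HasDerivAt (fun t => ‖γ t‖ ^ 2)
        (2 * ((γ t).re * (deriv γ t).re + (γ t).im * (deriv γ t).im)) t := by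
      simp only [hn]
      have h1 := hre _ _ _ (hd t)
      have h2 := him _ _ _ (hd t)
      exact ((h1.fun_mul h1).fun_add (h2.fun_mul h2)).congr_deriv (by ring)
    have hw : HasDerivAt (fun t => rinner (deriv γ t) (Complex.I * γ t))
        (rinner (deriv γ t) (Complex.I * γ t) * ((‖γ t‖ ^ 2 - 1) / ‖γ t‖ ^ 2)
          * ((γ t).re * (deriv γ t).re + (γ t).im * (deriv γ t).im)) t := by
      have h1 := hre _ _ _ (hd t)
      have h2 := him _ _ _ (hd t)
      have h3 := hre _ _ _ (hdd t)
      have h4 := him _ _ _ (hdd t)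
      rw [hAnc t] at h3 h4
      generalize rinner (deriv γ t) (Complex.I * γ t) * ((‖γ t‖ ^ 2 - 1) / ‖γ t‖ ^ 2) = k at *
      have h5 := (h4.fun_mul h1).fun_sub (h3.fun_mul h2)
      refine (h5.congr_deriv ?_).congr_of_eventuallyEq (Filter.Eventually.of_forall ?_)
      · simp
        ring
      · intro x
        simp [rinner]
        ring
    have hpos : ‖γ t‖ ^ 2 ≠ 0 := by simp [hne t]
    refine (((hw.fun_pow 2).fun_mul hr).fun_mul hr.fun_neg.exp).congr_deriv ?_
    generalize rinner (deriv γ t) (Complex.I * γ t) = w at *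
    generalize ‖γ t‖ ^ 2 = R at *
    field_simp
    push_cast
    ring
  exact is_const_of_deriv_eq_zero (fun t => (key t).differentiableAt) (fun t => (key t).deriv) t 0

lemma anc_aux_pd1 (f f' : ℝ → ℂ) (hd : ∀ t, HasDerivAt f (f' t) t) :
    pd1 (anciauxMap f) = anciauxMap f' := by
  funext t s
  exact (((hd t).mul_const _).prodMk ((hd t).mul_const _)).deriv

lemma anc_aux_pd2 (f : ℝ → ℂ) (t s : ℝ) :
    pd2 (pd2 (anciauxMap f)) t s = - anciauxMap f t s := by
  have hc : ∀ s : ℝ, HasDerivAt (fun s : ℝ => f t * (Real.cos s : ℂ))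
      (f t * ((-Real.sin s : ℝ) : ℂ)) s := fun s =>
    ((Real.hasDerivAt_cos s).ofReal_comp).const_mul _
  have hs : ∀ s : ℝ, HasDerivAt (fun s : ℝ => f t * (Real.sin s : ℂ))
      (f t * ((Real.cos s : ℝ) : ℂ)) s := fun s =>
    ((Real.hasDerivAt_sin s).ofReal_comp).const_mul _
  have h1 : ∀ s, pd2 (anciauxMap f) t s = (-(f t * (Real.sin s : ℂ)), f t * (Real.cos s : ℂ)) := by
    intro s
    refine ((hc s).prodMk (hs s)).deriv.trans ?_
    simp
  unfold pd2 at h1 ⊢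
  simp only [h1]
  refine (((hs s).fun_neg).prodMk (hc s)).deriv.trans ?_
  simp [anciauxMap]

/-- The squared norm of the mean curvature vector of the Anciaux immersion
φ(t,s) = γ(t)(cos s, sin s) equals E² e^{r²}/r², where r = |γ| and
E = |γ(0)|⟨γ'(0), iγ(0)⟩e^{-|γ(0)|²/2}. -/
theorem anciaux_mean_curvature (γ : ℝ → ℂ) (hsmooth : ContDiff ℝ (⊤ : ℕ∞) γ)
    (harc : ∀ t, ‖deriv γ t‖ = 1) (hne : ∀ t, γ t ≠ 0)
    (hAnc : ∀ t, deriv (deriv γ) t =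
      (rinner (deriv γ t) (Complex.I * γ t) * ((‖γ t‖ ^ 2 - 1) / ‖γ t‖ ^ 2))
        • (Complex.I * deriv γ t)) :
    ∀ t s : ℝ,
      norm2 (pd1 (pd1 (anciauxMap γ)) t s
          + (rinner (γ t) (deriv γ t) / ‖γ t‖ ^ 2) • pd1 (anciauxMap γ) t s
          + (1 / ‖γ t‖ ^ 2) • pd2 (pd2 (anciauxMap γ)) t s)
        = (‖γ 0‖ * rinner (deriv γ 0) (Complex.I * γ 0)
            * Real.exp (-‖γ 0‖ ^ 2 / 2)) ^ 2
          * Real.exp (‖γ t‖ ^ 2) / ‖γ t‖ ^ 2 := by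
  intro t s
  have hd : ∀ t, HasDerivAt γ (deriv γ t) t := fun t =>
    (hsmooth.differentiable (by simp) t).hasDerivAt
  have hdd : ∀ t, HasDerivAt (deriv γ) (deriv (deriv γ) t) t := fun t =>
    (((contDiff_infty_iff_deriv.1 hsmooth).2).differentiable (by simp) t).hasDerivAt
  have hcons := anc_aux_conserved γ hd hdd hne hAnc t
  rw [anc_aux_pd2, anc_aux_pd1 _ _ hd, anc_aux_pd1 _ _ hdd]
  have hn : ∀ z : ℂ, ‖z‖ ^ 2 = z.re * z.re + z.im * z.im := fun z => by
    rw [Complex.sq_norm, Complex.normSq_apply]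
  have hpos : ‖γ t‖ ^ 2 ≠ 0 := by simp [hne t]
  have hH : deriv (deriv γ) t + (rinner (γ t) (deriv γ t) / ‖γ t‖ ^ 2) • deriv γ t
      - (1 / ‖γ t‖ ^ 2) • γ t
      = rinner (deriv γ t) (Complex.I * γ t) • (Complex.I * deriv γ t) := by
    have h1 : (deriv γ t).re * (deriv γ t).re + (deriv γ t).im * (deriv γ t).im = 1 := by
      rw [← hn, harc]; norm_num
    rw [hAnc t]
    generalize ‖γ t‖ ^ 2 = R at *
    apply Complex.ext
    · simp [rinner]
      field_simp
      linear_combination (γ t).re * h1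
    · simp [rinner]
      field_simp
      linear_combination (γ t).im * h1
  have hL : norm2 (anciauxMap (deriv (deriv γ)) t s
      + (rinner (γ t) (deriv γ t) / ‖γ t‖ ^ 2) • anciauxMap (deriv γ) t s
      + (1 / ‖γ t‖ ^ 2) • -anciauxMap γ t s) = rinner (deriv γ t) (Complex.I * γ t) ^ 2 := by
    have : anciauxMap (deriv (deriv γ)) t s
      + (rinner (γ t) (deriv γ t) / ‖γ t‖ ^ 2) • anciauxMap (deriv γ) t s
      + (1 / ‖γ t‖ ^ 2) • -anciauxMap γ t s =
      ((rinner (deriv γ t) (Complex.I * γ t) • (Complex.I * deriv γ t)) * Real.cos s,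
       (rinner (deriv γ t) (Complex.I * γ t) • (Complex.I * deriv γ t)) * Real.sin s) := by
      rw [← hH]
      unfold anciauxMap
      apply Prod.ext
      · simp only [Prod.fst_add, Prod.smul_fst, Prod.fst_neg, Complex.real_smul]
        ring
      · simp only [Prod.snd_add, Prod.smul_snd, Prod.snd_neg, Complex.real_smul]
        ring
    rw [this]
    simp only [norm2, norm_mul, norm_smul, harc, Complex.norm_I, Complex.norm_real, mul_pow,
      Real.norm_eq_abs, sq_abs]
    linear_combination rinner (deriv γ t) (Complex.I * γ t) ^ 2 * Real.sin_sq_add_cos_sq s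
  rw [hL, eq_div_iff hpos, mul_pow, mul_pow, ← Real.exp_nat_mul]
  have e1 : ((2 : ℕ) : ℝ) * (-‖γ 0‖ ^ 2 / 2) = -‖γ 0‖ ^ 2 := by push_cast; ring
  have e2 : Real.exp (-‖γ t‖ ^ 2) * Real.exp (‖γ t‖ ^ 2) = 1 := by
    rw [← Real.exp_add]; simp
  rw [e1]
  linear_combination Real.exp (‖γ t‖ ^ 2) * hcons
    - rinner (deriv γ t) (Complex.I * γ t) ^ 2 * ‖γ t‖ ^ 2 * e2
end

section
/- Let m ≤ n be positive integers and let Ψ = Ψ_{m,n} : ℝ² → ℂ² be the Lee–Wang map. Then Ψ is a conformal immersion with orthogonal coordinate tangent vectors: for all (s,t), ⟨∂_sΨ, ∂_tΨ⟩ = 0 and ‖∂_sΨ‖² = ‖∂_tΨ‖² = ((m+n)/(mn))·(m·sin²s + n·cos²s) > 0. -/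
/-- The Lee–Wang map Ψ_{m,n}(s,t) = √(m+n)((1/√n)cos s e^{i√(n/m)t}, (1/√m)sin s e^{i√(m/n)t}). -/
noncomputable def leeWang (m n : ℕ) (s t : ℝ) : ℂ × ℂ :=
  ((Real.sqrt (m + n) * (1 / Real.sqrt n) * Real.cos s : ℝ)
      * Complex.exp (Complex.I * (Real.sqrt ((n : ℝ) / m) * t)),
   (Real.sqrt (m + n) * (1 / Real.sqrt m) * Real.sin s : ℝ)
      * Complex.exp (Complex.I * (Real.sqrt ((m : ℝ) / n) * t)))

lemma lw_arg (k y : ℝ) : Complex.I * ((k : ℂ) * (y : ℂ)) = ((k * y : ℝ) : ℂ) * Complex.I := by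
  push_cast
  ring

lemma lw_pd1 (m n : ℕ) (s t : ℝ) : pd1 (leeWang m n) s t =
    ((Real.sqrt (m + n) * (1 / Real.sqrt n) * (-Real.sin s) : ℝ)
      * Complex.exp ((Real.sqrt ((n : ℝ) / m) * t : ℝ) * Complex.I),
     (Real.sqrt (m + n) * (1 / Real.sqrt m) * Real.cos s : ℝ)
      * Complex.exp ((Real.sqrt ((m : ℝ) / n) * t : ℝ) * Complex.I)) := by
  unfold pd1 leeWang
  apply HasDerivAt.deriv
  have h1 := (((Real.hasDerivAt_cos s).const_mul
    (Real.sqrt (m + n) * (1 / Real.sqrt n))).ofReal_comp).mul_const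
      (Complex.exp ((Real.sqrt ((n : ℝ) / m) * t : ℝ) * Complex.I))
  have h2 := (((Real.hasDerivAt_sin s).const_mul
    (Real.sqrt (m + n) * (1 / Real.sqrt m))).ofReal_comp).mul_const
      (Complex.exp ((Real.sqrt ((m : ℝ) / n) * t : ℝ) * Complex.I))
  simp only [lw_arg]
  exact h1.prodMk h2

lemma lw_exp (k t : ℝ) : HasDerivAt
    (fun y : ℝ => Complex.exp (Complex.I * ((k : ℂ) * (y : ℂ))))
    (k * Complex.I * Complex.exp ((k * t : ℝ) * Complex.I)) t := by
  have h := (((Complex.ofRealCLM.hasDerivAt (x := t)).const_mul (k : ℂ)).const_mul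
    Complex.I).cexp
  simp only [Complex.ofRealCLM_apply, Complex.ofReal_one, mul_one, lw_arg] at h
  simp only [lw_arg]
  convert h using 1
  ring

lemma lw_pd2 (m n : ℕ) (s t : ℝ) : pd2 (leeWang m n) s t =
    ((Real.sqrt (m + n) * (1 / Real.sqrt n) * Real.cos s : ℝ)
      * (Real.sqrt ((n : ℝ) / m) * Complex.I *
        Complex.exp ((Real.sqrt ((n : ℝ) / m) * t : ℝ) * Complex.I)),
     (Real.sqrt (m + n) * (1 / Real.sqrt m) * Real.sin s : ℝ)
      * (Real.sqrt ((m : ℝ) / n) * Complex.I *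
        Complex.exp ((Real.sqrt ((m : ℝ) / n) * t : ℝ) * Complex.I))) := by
  unfold pd2 leeWang
  apply HasDerivAt.deriv
  exact ((lw_exp _ t).const_mul _).prodMk ((lw_exp _ t).const_mul _)

lemma lw_orth (a b c x : ℝ) : rinner ((a : ℂ) * Complex.exp ((x : ℂ) * Complex.I))
    ((b : ℂ) * ((c : ℂ) * Complex.I * Complex.exp ((x : ℂ) * Complex.I))) = 0 := by
  simp only [rinner, Complex.mul_re, Complex.mul_im, Complex.ofReal_re, Complex.ofReal_im,
    Complex.I_re, Complex.I_im]
  ring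

/-- The Lee–Wang map is a conformal immersion with orthogonal coordinate tangent
vectors: ⟨∂ₛΨ, ∂ₜΨ⟩ = 0 and ‖∂ₛΨ‖² = ‖∂ₜΨ‖² = ((m+n)/(mn))(m sin²s + n cos²s) > 0. -/
theorem lee_wang_conformal (m n : ℕ) (hm : 0 < m) (hmn : m ≤ n) :
    ∀ s t : ℝ,
      rinner2 (pd1 (leeWang m n) s t) (pd2 (leeWang m n) s t) = 0 ∧
      norm2 (pd1 (leeWang m n) s t)
        = ((m + n : ℝ) / (m * n)) * (m * Real.sin s ^ 2 + n * Real.cos s ^ 2) ∧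
      norm2 (pd2 (leeWang m n) s t)
        = ((m + n : ℝ) / (m * n)) * (m * Real.sin s ^ 2 + n * Real.cos s ^ 2) ∧
      0 < ((m + n : ℝ) / (m * n)) * (m * Real.sin s ^ 2 + n * Real.cos s ^ 2) := by
  intro s t
  have hm' : (0 : ℝ) < m := by exact_mod_cast hm
  have hn' : (0 : ℝ) < n := by exact_mod_cast hm.trans_le hmn
  rw [lw_pd1, lw_pd2]
  refine ⟨?_, ?_, ?_, ?_⟩
  · simp only [rinner2, lw_orth, add_zero]
  · simp only [norm2, norm_mul, Complex.norm_exp_ofReal_mul_I, Complex.norm_real, mul_pow,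
      Real.norm_eq_abs, sq_abs, one_div, inv_pow, neg_sq, one_pow, mul_one,
      Real.sq_sqrt hm'.le, Real.sq_sqrt hn'.le, Real.sq_sqrt (add_pos hm' hn').le]
    field_simp
  · simp only [norm2, norm_mul, Complex.norm_exp_ofReal_mul_I, Complex.norm_real, mul_pow,
      Real.norm_eq_abs, sq_abs, one_div, inv_pow, neg_sq, one_pow, mul_one, Complex.norm_I,
      Real.sq_sqrt hm'.le, Real.sq_sqrt hn'.le, Real.sq_sqrt (add_pos hm' hn').le,
      Real.sq_sqrt (div_pos hm' hn').le, Real.sq_sqrt (div_pos hn' hm').le]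
    field_simp
    ring
  · apply mul_pos (by positivity)
    have h := Real.sin_sq_add_cos_sq s
    have hmn' : (m : ℝ) ≤ n := by exact_mod_cast hmn
    nlinarith [mul_nonneg (sub_nonneg.2 hmn') (sq_nonneg (Real.cos s))]
end

section
/- Let m ≤ n be positive integers and let Ψ = Ψ_{m,n} : ℝ² → ℂ² be the Lee–Wang map, and set λ(s) = ‖∂_sΨ‖² = ((m+n)/(mn))·(m·sin²s + n·cos²s). Then Ψ satisfies the parametric self-shrinker equation: for all (s,t), ∂_s²Ψ + ∂_t²Ψ = −λ(s)·Ψ + ⟨Ψ, ∂_sΨ⟩·∂_sΨ. Since Ψ is a conformal parametrization with conformal factor λ, the left-hand side equals λ·H where H is the mean curvature vector, and the right-hand side equals −λ·Ψ^⊥ where Ψ^⊥ is the projection of the position vector onto the normal space; hence H = −Ψ^⊥, i.e. the Lee–Wang tori are self-shrinkers. -/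
/-- Generic map with free coefficients. -/
noncomputable def gmap (P Q : ℝ → ℝ) (a b : ℝ) (u v : ℂ) (s t : ℝ) : ℂ × ℂ :=
  ((P s : ℂ) * (u * Complex.exp (Complex.I * (a * t))),
   (Q s : ℂ) * (v * Complex.exp (Complex.I * (b * t))))

theorem pd1_gmap (P Q P' Q' : ℝ → ℝ) (a b : ℝ) (u v : ℂ)
    (hP : ∀ x, HasDerivAt P (P' x) x) (hQ : ∀ x, HasDerivAt Q (Q' x) x) :
    pd1 (gmap P Q a b u v) = gmap P' Q' a b u v := by
  funext s t
  exact (((hP s).ofReal_comp.mul_const _).prodMk ((hQ s).ofReal_comp.mul_const _)).deriv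

theorem exp_deriv_aux (a t : ℝ) :
    HasDerivAt (fun y : ℝ => Complex.exp (Complex.I * (a * y)))
      (Complex.I * a * Complex.exp (Complex.I * (a * t))) t := by
  have h := ((((hasDerivAt_id t).ofReal_comp).const_mul (a : ℂ)).const_mul Complex.I).cexp
  refine h.congr_deriv ?_
  simp
  ring

theorem pd2_gmap (P Q : ℝ → ℝ) (a b : ℝ) (u v : ℂ) :
    pd2 (gmap P Q a b u v) = gmap P Q a b (u * (Complex.I * a)) (v * (Complex.I * b)) := by
  funext s t
  have h := ((((exp_deriv_aux a t).const_mul u).const_mul (P s : ℂ)).prodMk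
    (((exp_deriv_aux b t).const_mul v).const_mul (Q s : ℂ))).deriv
  refine h.trans ?_
  simp only [gmap]
  ext1 <;> ring

theorem leeWang_eq (m n : ℕ) : leeWang m n =
    gmap (fun s => Real.sqrt (m + n) * (1 / Real.sqrt n) * Real.cos s)
      (fun s => Real.sqrt (m + n) * (1 / Real.sqrt m) * Real.sin s)
      (Real.sqrt ((n : ℝ) / m)) (Real.sqrt ((m : ℝ) / n)) 1 1 := by
  funext s t
  simp [leeWang, gmap]

theorem rinner_aux (p q a t : ℝ) :
    rinner ((p : ℂ) * (1 * Complex.exp (Complex.I * (a * t))))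
      ((q : ℂ) * (1 * Complex.exp (Complex.I * (a * t)))) = p * q := by
  have e : Complex.exp (Complex.I * (a * t)) = Complex.exp ((a * t : ℝ) * Complex.I) := by
    push_cast
    ring_nf
  rw [e]
  simp only [rinner, one_mul, Complex.re_ofReal_mul, Complex.im_ofReal_mul,
    Complex.exp_ofReal_mul_I_re, Complex.exp_ofReal_mul_I_im]
  linear_combination p * q * Real.sin_sq_add_cos_sq (a * t)

/-- The Lee–Wang map satisfies the parametric self-shrinker equation
∂ₛ²Ψ + ∂ₜ²Ψ = -λ(s)Ψ + ⟨Ψ, ∂ₛΨ⟩∂ₛΨ, with conformal factor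
λ(s) = ((m+n)/(mn))(m sin²s + n cos²s); hence H = -Ψ^⊥ and the Lee–Wang tori are
self-shrinkers. -/
theorem lee_wang_self_shrinker (m n : ℕ) (hm : 0 < m) (hmn : m ≤ n) :
    ∀ s t : ℝ,
      pd1 (pd1 (leeWang m n)) s t + pd2 (pd2 (leeWang m n)) s t
        = -(((m + n : ℝ) / (m * n)) * (m * Real.sin s ^ 2 + n * Real.cos s ^ 2))
            • leeWang m n s t
          + (rinner2 (leeWang m n s t) (pd1 (leeWang m n) s t))
            • pd1 (leeWang m n) s t := by
  intro s t
  have hm' : (0 : ℝ) < m := by exact_mod_cast hm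
  have hn' : (0 : ℝ) < n := by exact_mod_cast lt_of_lt_of_le hm hmn
  rw [leeWang_eq]
  set A : ℝ := Real.sqrt (m + n) * (1 / Real.sqrt n) with hA
  set B : ℝ := Real.sqrt (m + n) * (1 / Real.sqrt m) with hB
  set a : ℝ := Real.sqrt ((n : ℝ) / m) with ha
  set b : ℝ := Real.sqrt ((m : ℝ) / n) with hb
  have hA2 : A ^ 2 = (m + n) / n := by
    rw [hA, mul_pow, div_pow, Real.sq_sqrt (by positivity), Real.sq_sqrt hn'.le]
    ring
  have hB2 : B ^ 2 = (m + n) / m := by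
    rw [hB, mul_pow, div_pow, Real.sq_sqrt (by positivity), Real.sq_sqrt hm'.le]
    ring
  have ha2 : a ^ 2 = n / m := Real.sq_sqrt (by positivity)
  have hb2 : b ^ 2 = m / n := Real.sq_sqrt (by positivity)
  have hc : ∀ C x : ℝ, HasDerivAt (fun s => C * Real.cos s) (C * -Real.sin x) x :=
    fun C x => (Real.hasDerivAt_cos x).const_mul C
  have hs : ∀ C x : ℝ, HasDerivAt (fun s => C * Real.sin s) (C * Real.cos x) x :=
    fun C x => (Real.hasDerivAt_sin x).const_mul C
  have hs' : ∀ C x : ℝ, HasDerivAt (fun s => C * -Real.sin s) (C * -Real.cos x) x :=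
    fun C x => (Real.hasDerivAt_sin x).neg.const_mul C
  rw [pd1_gmap _ _ _ _ a b 1 1 (hc A) (hs B), pd1_gmap _ _ _ _ a b 1 1 (hs' A) (hc B),
    pd2_gmap, pd2_gmap]
  have hr : rinner2 (gmap (fun s => A * Real.cos s) (fun s => B * Real.sin s) a b 1 1 s t)
      (gmap (fun x => A * -Real.sin x) (fun x => B * Real.cos x) a b 1 1 s t)
      = (m + n) * (n - m) / (m * n) * (Real.cos s * Real.sin s) := by
    simp only [rinner2, gmap]
    rw [rinner_aux, rinner_aux]
    have h : B ^ 2 - A ^ 2 = (m + n) * (n - m) / (m * n) := by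
      rw [hA2, hB2]
      field_simp
    rw [← h]
    ring
  rw [hr]
  have h1 : A * -Real.cos s - a ^ 2 * (A * Real.cos s)
      = -(((m + n : ℝ) / (m * n)) * (m * Real.sin s ^ 2 + n * Real.cos s ^ 2)) * (A * Real.cos s)
        + (m + n) * (n - m) / (m * n) * (Real.cos s * Real.sin s) * (A * -Real.sin s) := by
    rw [ha2, Real.sin_sq, show (m + n : ℝ) * (n - m) / (m * n) * (Real.cos s * Real.sin s)
      * (A * -Real.sin s) = -((m + n : ℝ) * (n - m) / (m * n) * Real.cos s * A * Real.sin s ^ 2)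
      by ring, Real.sin_sq]
    field_simp
    ring
  have h2 : B * -Real.sin s - b ^ 2 * (B * Real.sin s)
      = -(((m + n : ℝ) / (m * n)) * (m * Real.sin s ^ 2 + n * Real.cos s ^ 2)) * (B * Real.sin s)
        + (m + n) * (n - m) / (m * n) * (Real.cos s * Real.sin s) * (B * Real.cos s) := by
    rw [hb2, show (m + n : ℝ) * (n - m) / (m * n) * (Real.cos s * Real.sin s)
      * (B * Real.cos s) = (m + n : ℝ) * (n - m) / (m * n) * Real.sin s * B * Real.cos s ^ 2
      by ring, Real.cos_sq']
    field_simp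
    ring
  have h1c := congrArg (fun x : ℝ => (x : ℂ)) h1
  have h2c := congrArg (fun x : ℝ => (x : ℂ)) h2
  ext1
  · simp only [gmap, Prod.fst_add, Prod.smul_fst, Complex.real_smul]
    push_cast at h1c ⊢
    linear_combination Complex.exp (Complex.I * (a * t)) * h1c
      + A * Complex.cos s * a ^ 2 * Complex.exp (Complex.I * (a * t)) * Complex.I_sq
  · simp only [gmap, Prod.snd_add, Prod.smul_snd, Complex.real_smul]
    push_cast at h2c ⊢
    linear_combination Complex.exp (Complex.I * (b * t)) * h2c
      + B * Complex.sin s * b ^ 2 * Complex.exp (Complex.I * (b * t)) * Complex.I_sq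
end

section
/- Let m ≤ n be positive integers and let Ψ = Ψ_{m,n} : ℝ² → ℂ² be the Lee–Wang map. Then the squared norm of its mean curvature vector satisfies, for all (s,t): ‖∂_s²Ψ + ∂_t²Ψ‖² / ‖∂_sΨ‖⁴ = (m+n)/(n·cos²s + m·sin²s), and consequently 1 < (m+n)/n ≤ ‖∂_s²Ψ + ∂_t²Ψ‖²/‖∂_sΨ‖⁴ ≤ (m+n)/m. -/
/-- A general map of separated form. -/
noncomputable def sepMap (a b : ℝ) (f g : ℝ → ℝ) (s t : ℝ) : ℂ × ℂ :=
  ((f s : ℝ) * Complex.exp (Complex.I * (a * t)), (g s : ℝ) * Complex.exp (Complex.I * (b * t)))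

lemma pd1_sepMap (a b : ℝ) (f g f' g' : ℝ → ℝ) (hf : ∀ s, HasDerivAt f (f' s) s)
    (hg : ∀ s, HasDerivAt g (g' s) s) : pd1 (sepMap a b f g) = sepMap a b f' g' := by
  funext s t
  exact (((hf s).ofReal_comp.mul_const _).prodMk ((hg s).ofReal_comp.mul_const _)).deriv

lemma hasDerivAt_cexp_line (a t : ℝ) :
    HasDerivAt (fun y : ℝ => Complex.exp (Complex.I * (a * y)))
      (Complex.exp (Complex.I * (a * t)) * (Complex.I * a)) t := by
  have h : HasDerivAt (fun y : ℝ => Complex.I * ((a : ℂ) * (y : ℂ))) (Complex.I * a) t := by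
    have h0 : HasDerivAt (fun y : ℝ => (y : ℂ)) 1 t := (hasDerivAt_id t).ofReal_comp
    simpa using (h0.const_mul (a : ℂ)).const_mul Complex.I
  exact h.cexp

lemma pd2_pd2_sepMap (a b : ℝ) (f g : ℝ → ℝ) :
    pd2 (pd2 (sepMap a b f g)) =
      sepMap a b (fun s => -(a ^ 2 * f s)) (fun s => -(b ^ 2 * g s)) := by
  have h1 : pd2 (sepMap a b f g) = fun (s t : ℝ) =>
      (((f s : ℝ) : ℂ) * (Complex.exp (Complex.I * (a * t)) * (Complex.I * a)),
        ((g s : ℝ) : ℂ) * (Complex.exp (Complex.I * (b * t)) * (Complex.I * b))) := by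
    funext s t
    exact (((hasDerivAt_cexp_line a t).const_mul _).prodMk
      ((hasDerivAt_cexp_line b t).const_mul _)).deriv
  rw [h1]
  funext s t
  have h2 := ((((hasDerivAt_cexp_line a t).mul_const (Complex.I * a)).const_mul
    ((f s : ℝ) : ℂ)).prodMk (((hasDerivAt_cexp_line b t).mul_const (Complex.I * b)).const_mul
    ((g s : ℝ) : ℂ))).deriv
  refine Eq.trans h2 ?_
  have hI := Complex.I_sq
  ext1
  · simp only [sepMap]
    push_cast
    linear_combination (f s * Complex.exp (Complex.I * (a * t)) * a ^ 2 : ℂ) * hI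
  · simp only [sepMap]
    push_cast
    linear_combination (g s * Complex.exp (Complex.I * (b * t)) * b ^ 2 : ℂ) * hI

lemma sepMap_add (a b : ℝ) (f g f' g' : ℝ → ℝ) (s t : ℝ) :
    sepMap a b f g s t + sepMap a b f' g' s t =
      sepMap a b (fun s => f s + f' s) (fun s => g s + g' s) s t := by
  simp only [sepMap, Prod.mk_add_mk]
  push_cast
  simp only [add_mul]

lemma norm2_sepMap (a b : ℝ) (f g : ℝ → ℝ) (s t : ℝ) :
    norm2 (sepMap a b f g s t) = f s ^ 2 + g s ^ 2 := by
  have h : ∀ a t : ℝ, ‖Complex.exp (Complex.I * (a * t))‖ = 1 := by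
    intro a t
    rw [← Complex.ofReal_mul, mul_comm]
    exact Complex.norm_exp_ofReal_mul_I _
  simp [norm2, sepMap, h]

/-- The squared norm of the mean curvature vector of the Lee–Wang torus:
‖∂ₛ²Ψ + ∂ₜ²Ψ‖²/‖∂ₛΨ‖⁴ = (m+n)/(n cos²s + m sin²s), which lies in
((m+n)/n, (m+n)/m] with 1 < (m+n)/n. -/
theorem lee_wang_mean_curvature (m n : ℕ) (hm : 0 < m) (hmn : m ≤ n) :
    ∀ s t : ℝ,
      norm2 (pd1 (pd1 (leeWang m n)) s t + pd2 (pd2 (leeWang m n)) s t)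
          / (norm2 (pd1 (leeWang m n) s t)) ^ 2
        = (m + n : ℝ) / (n * Real.cos s ^ 2 + m * Real.sin s ^ 2) ∧
      1 < (m + n : ℝ) / n ∧
      (m + n : ℝ) / n ≤
        norm2 (pd1 (pd1 (leeWang m n)) s t + pd2 (pd2 (leeWang m n)) s t)
          / (norm2 (pd1 (leeWang m n) s t)) ^ 2 ∧
      norm2 (pd1 (pd1 (leeWang m n)) s t + pd2 (pd2 (leeWang m n)) s t)
          / (norm2 (pd1 (leeWang m n) s t)) ^ 2 ≤ (m + n : ℝ) / m := by
  intro s t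
  have hm' : (0 : ℝ) < m := by exact_mod_cast hm
  have hmn' : (m : ℝ) ≤ n := by exact_mod_cast hmn
  have hn' : (0 : ℝ) < n := lt_of_lt_of_le hm' hmn'
  have hcs := Real.sin_sq_add_cos_sq s
  have hD : (0 : ℝ) < n * Real.cos s ^ 2 + m * Real.sin s ^ 2 := by
    nlinarith [mul_nonneg (sub_nonneg.2 hmn') (sq_nonneg (Real.cos s))]
  have key : norm2 (pd1 (pd1 (leeWang m n)) s t + pd2 (pd2 (leeWang m n)) s t)
          / (norm2 (pd1 (leeWang m n) s t)) ^ 2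
        = (m + n : ℝ) / (n * Real.cos s ^ 2 + m * Real.sin s ^ 2) := by
    obtain ⟨A, hA⟩ : ∃ A, A = Real.sqrt (m + n) * (1 / Real.sqrt n) := ⟨_, rfl⟩
    obtain ⟨B, hB⟩ : ∃ B, B = Real.sqrt (m + n) * (1 / Real.sqrt m) := ⟨_, rfl⟩
    have hA2 : A ^ 2 = (m + n) / n := by
      rw [hA, mul_pow, div_pow, Real.sq_sqrt (by positivity), Real.sq_sqrt hn'.le]; ring
    have hB2 : B ^ 2 = (m + n) / m := by
      rw [hB, mul_pow, div_pow, Real.sq_sqrt (by positivity), Real.sq_sqrt hm'.le]; ring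
    have h0 : leeWang m n = sepMap (Real.sqrt ((n : ℝ) / m)) (Real.sqrt ((m : ℝ) / n))
        (fun s => A * Real.cos s) (fun s => B * Real.sin s) := by
      rw [hA, hB]; rfl
    have h1 : pd1 (leeWang m n) = sepMap (Real.sqrt ((n : ℝ) / m)) (Real.sqrt ((m : ℝ) / n))
        (fun s => A * -Real.sin s) (fun s => B * Real.cos s) := by
      rw [h0]
      exact pd1_sepMap _ _ _ _ _ _ (fun s => (Real.hasDerivAt_cos s).const_mul A)
        (fun s => (Real.hasDerivAt_sin s).const_mul B)
    have h2 : pd1 (pd1 (leeWang m n)) =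
        sepMap (Real.sqrt ((n : ℝ) / m)) (Real.sqrt ((m : ℝ) / n))
        (fun s => A * -Real.cos s) (fun s => B * -Real.sin s) := by
      rw [h1]
      exact pd1_sepMap _ _ _ _ _ _ (fun s => (Real.hasDerivAt_sin s).neg.const_mul A)
        (fun s => (Real.hasDerivAt_cos s).const_mul B)
    rw [h2, h1, h0, pd2_pd2_sepMap, sepMap_add, norm2_sepMap, norm2_sepMap]
    rw [Real.sq_sqrt (by positivity), Real.sq_sqrt (by positivity)]
    have e1 : (A * -Real.cos s + -((n : ℝ) / m * (A * Real.cos s))) ^ 2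
        + (B * -Real.sin s + -((m : ℝ) / n * (B * Real.sin s))) ^ 2
        = (m + n) ^ 3 / (m * n) ^ 2 * (n * Real.cos s ^ 2 + m * Real.sin s ^ 2) := by
      have : (A * -Real.cos s + -((n : ℝ) / m * (A * Real.cos s))) ^ 2
        + (B * -Real.sin s + -((m : ℝ) / n * (B * Real.sin s))) ^ 2
        = A ^ 2 * (1 + (n : ℝ) / m) ^ 2 * Real.cos s ^ 2
          + B ^ 2 * (1 + (m : ℝ) / n) ^ 2 * Real.sin s ^ 2 := by ring
      rw [this, hA2, hB2]
      field_simp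
      ring
    have e2 : (A * -Real.sin s) ^ 2 + (B * Real.cos s) ^ 2
        = (m + n) / (m * n) * (n * Real.cos s ^ 2 + m * Real.sin s ^ 2) := by
      rw [mul_pow, mul_pow, hA2, hB2]
      field_simp
      ring
    rw [e1, e2]
    generalize (n * Real.cos s ^ 2 + m * Real.sin s ^ 2 : ℝ) = D at hD
    have : (m + n : ℝ) ≠ 0 := by positivity
    field_simp
  rw [key]
  refine ⟨rfl, ?_, ?_, ?_⟩
  · rw [lt_div_iff₀ hn']; linarith
  · apply div_le_div_of_nonneg_left (by positivity) hD
    nlinarith [mul_nonneg (sub_nonneg.2 hmn') (sq_nonneg (Real.sin s))]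
  · apply div_le_div_of_nonneg_left (by positivity) hm'
    nlinarith [mul_nonneg (sub_nonneg.2 hmn') (sq_nonneg (Real.cos s))]
end

section
/- Let m ≤ n be positive integers, let Ψ = Ψ_{m,n} : ℝ² → ℂ² be the Lee–Wang map, λ(s) = ‖∂_sΨ‖², and for v ∈ ℂ² let P(v) = v − (⟨v, ∂_sΨ⟩/λ)·∂_sΨ − (⟨v, ∂_tΨ⟩/λ)·∂_tΨ denote the projection onto the normal space of Ψ. Then the squared norm of the second fundamental form, |σ|² = (1/λ²)·( ‖P(∂_s²Ψ)‖² + 2‖P(∂_s∂_tΨ)‖² + ‖P(∂_t²Ψ)‖² ), satisfies for all (s,t): (3m² + n²)/(n(m+n)) ≤ |σ|² ≤ (m² + 3n²)/(m(m+n)). -/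
/-- The conformal factor λ = ‖∂ₛΨ‖² of the Lee–Wang map. -/
noncomputable def lamLW (m n : ℕ) (s t : ℝ) : ℝ := norm2 (pd1 (leeWang m n) s t)

/-- Projection of v ∈ ℂ² onto the normal space of the Lee–Wang immersion at (s,t). -/
noncomputable def projLW (m n : ℕ) (s t : ℝ) (v : ℂ × ℂ) : ℂ × ℂ :=
  v - (rinner2 v (pd1 (leeWang m n) s t) / lamLW m n s t) • pd1 (leeWang m n) s t
    - (rinner2 v (pd2 (leeWang m n) s t) / lamLW m n s t) • pd2 (leeWang m n) s t

/-- The squared norm of the second fundamental form of the Lee–Wang immersion,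
|σ|² = (1/λ²)(‖P(∂ₛ²Ψ)‖² + 2‖P(∂ₛ∂ₜΨ)‖² + ‖P(∂ₜ²Ψ)‖²). -/
noncomputable def sigma2LW (m n : ℕ) (s t : ℝ) : ℝ :=
  (1 / (lamLW m n s t) ^ 2) *
    (norm2 (projLW m n s t (pd1 (pd1 (leeWang m n)) s t))
      + 2 * norm2 (projLW m n s t (pd2 (pd1 (leeWang m n)) s t))
      + norm2 (projLW m n s t (pd2 (pd2 (leeWang m n)) s t)))

lemma norm2_eq (v : ℂ × ℂ) : norm2 v = rinner2 v v := by
  simp only [norm2, rinner2, rinner, Complex.sq_norm, Complex.normSq_apply]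

/-- Pythagoras for the projection off two orthogonal vectors of equal length. -/
lemma norm2_proj (v X Y : ℂ × ℂ) (l : ℝ) (hl : l ≠ 0) (hX : rinner2 X X = l)
    (hY : rinner2 Y Y = l) (hXY : rinner2 X Y = 0) :
    norm2 (v - (rinner2 v X / l) • X - (rinner2 v Y / l) • Y)
      = rinner2 v v - (rinner2 v X) ^ 2 / l - (rinner2 v Y) ^ 2 / l := by
  have key : ∀ x y : ℝ, norm2 (v - x • X - y • Y) = rinner2 v v + x ^ 2 * rinner2 X X
      + y ^ 2 * rinner2 Y Y - 2 * x * rinner2 v X - 2 * y * rinner2 v Y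
      + 2 * x * y * rinner2 X Y := by
    intro x y
    rw [norm2_eq]
    simp only [rinner2, rinner, Prod.fst_sub, Prod.snd_sub, Prod.smul_fst, Prod.smul_snd,
      Complex.sub_re, Complex.sub_im, Complex.smul_re, Complex.smul_im, smul_eq_mul]
    ring
  rw [key, hX, hY, hXY]
  field_simp
  ring

/-- `(x e^{ipt}, y e^{iqt})`. -/
noncomputable def tw (p q : ℝ) (x y : ℂ) (t : ℝ) : ℂ × ℂ :=
  (x * Complex.exp (Complex.I * (p * t)), y * Complex.exp (Complex.I * (q * t)))

lemma rinner_exp (x y : ℂ) (p t : ℝ) :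
    rinner (x * Complex.exp (Complex.I * (p * t))) (y * Complex.exp (Complex.I * (p * t)))
      = rinner x y := by
  have h : Complex.I * ((p : ℂ) * t) = ((p * t : ℝ) : ℂ) * Complex.I := by push_cast; ring
  rw [h]
  have hc := Real.sin_sq_add_cos_sq (p * t)
  simp only [rinner, Complex.mul_re, Complex.mul_im, Complex.exp_ofReal_mul_I_re,
    Complex.exp_ofReal_mul_I_im]
  linear_combination (x.re * y.re + x.im * y.im) * hc

lemma rinner2_tw (p q : ℝ) (x y z w : ℂ) (t : ℝ) :
    rinner2 (tw p q x y t) (tw p q z w t) = rinner x z + rinner y w := by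
  simp only [rinner2, tw, rinner_exp]

lemma hasDeriv_exp (x : ℂ) (p t : ℝ) :
    HasDerivAt (fun t : ℝ => x * Complex.exp (Complex.I * (p * t)))
      ((x * (Complex.I * p)) * Complex.exp (Complex.I * (p * t))) t := by
  have h1 : HasDerivAt (fun t : ℝ => (t : ℂ)) 1 t := Complex.ofRealCLM.hasDerivAt
  have h2 := (((h1.const_mul (p : ℂ)).const_mul Complex.I).cexp).const_mul x
  exact h2.congr_deriv (by ring)

lemma deriv_tw (p q : ℝ) (x y : ℂ) (t : ℝ) :
    deriv (tw p q x y) t = tw p q (x * (Complex.I * p)) (y * (Complex.I * q)) t :=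
  ((hasDeriv_exp x p t).prodMk (hasDeriv_exp y q t)).deriv

lemma deriv_tw1 (p q : ℝ) (f g : ℝ → ℝ) (df dg s t : ℝ) (hf : HasDerivAt f df s)
    (hg : HasDerivAt g dg s) :
    deriv (fun s => tw p q (f s : ℝ) (g s : ℝ) t) s = tw p q (df : ℝ) (dg : ℝ) t :=
  ((hf.ofReal_comp.mul_const _).prodMk (hg.ofReal_comp.mul_const _)).deriv

lemma sigma_formula (m n : ℕ) (a b p q s t : ℝ)
    (hL : leeWang m n = fun s t => tw p q ((a * Real.cos s : ℝ)) ((b * Real.sin s : ℝ)) t)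
    (ha : 0 < a) (hb : 0 < b) (hp : p * a = b) (hq : q * b = a) (hab : a ^ 2 + b ^ 2 = a ^ 2 * b ^ 2) :
    ∃ l : ℝ, l = a ^ 2 * Real.sin s ^ 2 + b ^ 2 * Real.cos s ^ 2 ∧ 0 < l ∧
      sigma2LW m n s t = a ^ 2 * b ^ 2 * (l ^ 2 - 2 * l + 4) / l ^ 3 := by
  have d1 : pd1 (leeWang m n) =
      fun s t => tw p q ((a * (-Real.sin s) : ℝ)) ((b * Real.cos s : ℝ)) t := by
    funext s t
    rw [hL]
    exact deriv_tw1 p q _ _ _ _ s t ((Real.hasDerivAt_cos s).const_mul a)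
      ((Real.hasDerivAt_sin s).const_mul b)
  have d2 : pd2 (leeWang m n) =
      fun s t => tw p q ((a * Real.cos s : ℝ) * (Complex.I * p))
        ((b * Real.sin s : ℝ) * (Complex.I * q)) t := by
    funext s t
    rw [hL]
    exact deriv_tw p q _ _ t
  have d11 : pd1 (pd1 (leeWang m n)) s t =
      tw p q ((a * (-Real.cos s) : ℝ)) ((b * (-Real.sin s) : ℝ)) t := by
    rw [d1]
    exact deriv_tw1 p q _ _ _ _ s t ((Real.hasDerivAt_sin s).neg.const_mul a)
      ((Real.hasDerivAt_cos s).const_mul b)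
  have d12 : pd2 (pd1 (leeWang m n)) s t =
      tw p q ((a * (-Real.sin s) : ℝ) * (Complex.I * p))
        ((b * Real.cos s : ℝ) * (Complex.I * q)) t := by
    rw [d1]
    exact deriv_tw p q _ _ t
  have d22 : pd2 (pd2 (leeWang m n)) s t =
      tw p q ((a * Real.cos s : ℝ) * (Complex.I * p) * (Complex.I * p))
        ((b * Real.sin s : ℝ) * (Complex.I * q) * (Complex.I * q)) t := by
    rw [d2]
    exact deriv_tw p q _ _ t
  have hp' : p = b / a := by field_simp; exact hp
  have hq' : q = a / b := by field_simp; exact hq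
  have hsc := Real.sin_sq_add_cos_sq s
  obtain ⟨l, hl⟩ : ∃ l : ℝ, l = a ^ 2 * Real.sin s ^ 2 + b ^ 2 * Real.cos s ^ 2 := ⟨_, rfl⟩
  have hlpos : 0 < l := by
    rw [hl]
    rcases eq_or_ne (Real.sin s) 0 with h | h
    · have : Real.cos s ^ 2 = 1 := by rw [h] at hsc; linarith
      rw [h, this]; positivity
    · positivity
  refine ⟨l, hl, hlpos, ?_⟩
  have hlam : lamLW m n s t = l := by
    rw [lamLW, norm2_eq, d1, rinner2_tw, hl]
    simp only [rinner, Complex.mul_re, Complex.mul_im, Complex.ofReal_re, Complex.ofReal_im,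
      Complex.I_re, Complex.I_im]
    ring
  have hX : rinner2 (pd1 (leeWang m n) s t) (pd1 (leeWang m n) s t) = l := by
    rw [← norm2_eq]; exact hlam
  have hY : rinner2 (pd2 (leeWang m n) s t) (pd2 (leeWang m n) s t) = l := by
    rw [d2, rinner2_tw, hl, hp', hq']
    simp only [rinner, Complex.mul_re, Complex.mul_im, Complex.ofReal_re, Complex.ofReal_im,
      Complex.I_re, Complex.I_im]
    field_simp
    ring
  have hXY : rinner2 (pd1 (leeWang m n) s t) (pd2 (leeWang m n) s t) = 0 := by
    rw [d1, d2, rinner2_tw]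
    simp only [rinner, Complex.mul_re, Complex.mul_im, Complex.ofReal_re, Complex.ofReal_im,
      Complex.I_re, Complex.I_im]
    ring
  have hP : ∀ v, norm2 (projLW m n s t v) = rinner2 v v
      - (rinner2 v (pd1 (leeWang m n) s t)) ^ 2 / l
      - (rinner2 v (pd2 (leeWang m n) s t)) ^ 2 / l := by
    intro v
    rw [projLW, hlam]
    exact norm2_proj v _ _ l hlpos.ne' hX hY hXY
  have hl0 := hlpos.ne'
  have hC : Real.cos s ^ 2 = 1 - Real.sin s ^ 2 := by linarith
  have e11 : norm2 (projLW m n s t (pd1 (pd1 (leeWang m n)) s t)) = a ^ 2 * b ^ 2 / l := by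
    rw [hP, d11, d1, d2, rinner2_tw, rinner2_tw, rinner2_tw, eq_div_iff hl0, sub_mul, sub_mul,
      div_mul_cancel₀ _ hl0, div_mul_cancel₀ _ hl0, hl]
    simp only [rinner, Complex.mul_re, Complex.mul_im, Complex.ofReal_re, Complex.ofReal_im,
      Complex.I_re, Complex.I_im]
    linear_combination (a ^ 2 * b ^ 2) * (Real.sin s ^ 2 + Real.cos s ^ 2 + 1) * hsc
  have e12 : norm2 (projLW m n s t (pd2 (pd1 (leeWang m n)) s t)) = a ^ 2 * b ^ 2 / l := by
    rw [hP, d12, d1, d2, rinner2_tw, rinner2_tw, rinner2_tw, eq_div_iff hl0, sub_mul, sub_mul,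
      div_mul_cancel₀ _ hl0, div_mul_cancel₀ _ hl0, hl, hp', hq']
    simp only [rinner, Complex.mul_re, Complex.mul_im, Complex.ofReal_re, Complex.ofReal_im,
      Complex.I_re, Complex.I_im]
    field_simp
    linear_combination (a ^ 6 * b ^ 6) * (Real.sin s ^ 2 + Real.cos s ^ 2 + 1) * hsc
  have e22 : norm2 (projLW m n s t (pd2 (pd2 (leeWang m n)) s t))
      = a ^ 2 * b ^ 2 * (l - 1) ^ 2 / l := by
    have h1 : a ^ 2 * b ^ 2 * (l - 1) ^ 2
        = (b ^ 4 * Real.cos s ^ 2 + a ^ 4 * Real.sin s ^ 2) ^ 2 / (a ^ 2 * b ^ 2) := by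
      have : b ^ 4 * Real.cos s ^ 2 + a ^ 4 * Real.sin s ^ 2 = a ^ 2 * b ^ 2 * (l - 1) := by
        rw [hl, hC]
        linear_combination (a ^ 2 * Real.sin s ^ 2 + b ^ 2 * (1 - Real.sin s ^ 2)) * hab
      rw [this]
      field_simp
    rw [h1]
    rw [hP, d22, d1, d2, rinner2_tw, rinner2_tw, rinner2_tw, eq_div_iff hl0, sub_mul, sub_mul,
      div_mul_cancel₀ _ hl0, div_mul_cancel₀ _ hl0, hl, hp', hq']
    simp only [rinner, Complex.mul_re, Complex.mul_im, Complex.ofReal_re, Complex.ofReal_im,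
      Complex.I_re, Complex.I_im]
    field_simp
    ring
  rw [sigma2LW, hlam, e11, e12, e22]
  field_simp
  ring

/-- The profile `(l² - 2l + 4)/l³` is decreasing on the positive reals. -/
lemma profile_anti (l k : ℝ) (hl : 0 < l) (hlk : l ≤ k) :
    (k ^ 2 - 2 * k + 4) / k ^ 3 ≤ (l ^ 2 - 2 * l + 4) / l ^ 3 := by
  have hk : 0 < k := lt_of_lt_of_le hl hlk
  have e : ∀ r : ℝ, 0 < r → (r ^ 2 - 2 * r + 4) / r ^ 3 = r⁻¹ - 2 * r⁻¹ ^ 2 + 4 * r⁻¹ ^ 3 := by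
    intro r hr
    field_simp
  rw [e k hk, e l hl]
  have hi : k⁻¹ ≤ l⁻¹ := inv_anti₀ hl hlk
  generalize k⁻¹ = x at *
  generalize l⁻¹ = y at *
  have : 0 ≤ (y - x) * (1 - 2 * (x + y) + 4 * (x ^ 2 + x * y + y ^ 2)) := by
    apply mul_nonneg (by linarith)
    nlinarith [sq_nonneg (x - y), sq_nonneg (3 * (x + y) - 1)]
  nlinarith

/-- Bounds for the squared norm of the second fundamental form of the Lee–Wang
tori: (3m² + n²)/(n(m+n)) ≤ |σ|² ≤ (m² + 3n²)/(m(m+n)). -/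
theorem lee_wang_second_fundamental_form (m n : ℕ) (hm : 0 < m) (hmn : m ≤ n) :
    ∀ s t : ℝ,
      (3 * (m : ℝ) ^ 2 + (n : ℝ) ^ 2) / ((n : ℝ) * ((m : ℝ) + n)) ≤ sigma2LW m n s t ∧
      sigma2LW m n s t ≤ ((m : ℝ) ^ 2 + 3 * (n : ℝ) ^ 2) / ((m : ℝ) * ((m : ℝ) + n)) := by
  intro s t
  have hm' : (0 : ℝ) < m := by exact_mod_cast hm
  have hmn' : (m : ℝ) ≤ n := by exact_mod_cast hmn
  have hn' : (0 : ℝ) < n := lt_of_lt_of_le hm' hmn'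
  have sm : Real.sqrt m ^ 2 = m := Real.sq_sqrt hm'.le
  have sn : Real.sqrt n ^ 2 = n := Real.sq_sqrt hn'.le
  have smn : Real.sqrt ((m : ℝ) + n) ^ 2 = m + n := Real.sq_sqrt (by positivity)
  have pm : 0 < Real.sqrt m := Real.sqrt_pos.2 hm'
  have pn : 0 < Real.sqrt n := Real.sqrt_pos.2 hn'
  have pmn : 0 < Real.sqrt ((m : ℝ) + n) := Real.sqrt_pos.2 (by positivity)
  have ha2 : (Real.sqrt (m + n) * (1 / Real.sqrt n)) ^ 2 = ((m : ℝ) + n) / n := by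
    rw [mul_pow, div_pow, smn, sn]; ring
  have hb2 : (Real.sqrt (m + n) * (1 / Real.sqrt m)) ^ 2 = ((m : ℝ) + n) / m := by
    rw [mul_pow, div_pow, smn, sm]; ring
  obtain ⟨l, hl, hlpos, hs⟩ := sigma_formula m n (Real.sqrt (m + n) * (1 / Real.sqrt n))
    (Real.sqrt (m + n) * (1 / Real.sqrt m)) (Real.sqrt ((n : ℝ) / m)) (Real.sqrt ((m : ℝ) / n)) s t
    rfl (by positivity) (by positivity)
    (by rw [Real.sqrt_div hn'.le]; field_simp) (by rw [Real.sqrt_div hm'.le]; field_simp)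
    (by rw [ha2, hb2]; field_simp)
  rw [ha2, hb2] at hl hs
  have hsc := Real.sin_sq_add_cos_sq s
  have hle : ((m : ℝ) + n) / n ≤ ((m : ℝ) + n) / m := by gcongr
  have hA : ((m : ℝ) + n) / n ≤ l := by
    rw [hl]; nlinarith [mul_nonneg (sub_nonneg.2 hle) (sq_nonneg (Real.cos s))]
  have hB : l ≤ ((m : ℝ) + n) / m := by
    rw [hl]; nlinarith [mul_nonneg (sub_nonneg.2 hle) (sq_nonneg (Real.sin s))]
  have f1 := profile_anti _ _ (by positivity) hA
  have f2 := profile_anti _ _ hlpos hB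
  have hK : 0 ≤ ((m : ℝ) + n) / n * (((m : ℝ) + n) / m) := by positivity
  have g1 := mul_le_mul_of_nonneg_left f1 hK
  have g2 := mul_le_mul_of_nonneg_left f2 hK
  rw [hs, mul_div_assoc]
  constructor
  · refine le_trans (le_of_eq ?_) g2
    field_simp
    ring
  · refine le_trans g1 (le_of_eq ?_)
    field_simp
    ring
end
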